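/- arXiv:0910.3603 — 3 statements merged into one kernel-verified Lean document; each statement's English description precedes it below -/
import Mathlib

section
/- Suppose in addition that E is a finite set and the observability condition holds: for all μ, ν ∈ P(E), Q_μ = Q_ν implies μ = ν. Then the filter transition kernel Π admits a unique Π-invariant probability measure on P(E). -/
open MeasureTheory Filter Topology ENNReal

/-- `P(E)`: probability vectors on a countable set `E`, with the topology of
pointwise (equivalently, weak) convergence inherited from `E → ℝ`. -/
abbrev ProbVec (E : Type*) := {p : E → ℝ // (∀ i, 0 ≤ p i) ∧ HasSum p 1}

/-- Row-vector/matrix product `(p M(y))_j = ∑_i p_i M_{ij}(y)`. -/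
noncomputable def rowMul {E F : Type*} (M : F → E → E → ℝ) (p : E → ℝ) (y : F) : E → ℝ :=
  fun j => ∑' i, p i * M y i j

/-- Iterated product `p M(y₁)⋯M(yₙ)` along a list of observations. -/
noncomputable def rowIter {E F : Type*} (M : F → E → E → ℝ) (p : E → ℝ) (ys : List F) : E → ℝ :=
  ys.foldl (rowMul M) p

/-- `p 1 = ∑_j p_j`. -/
noncomputable def rowTot {E : Type*} (p : E → ℝ) : ℝ := ∑' j, p j

/-- One step of the filter: `μ ↦ μM(y)/(μM(y)1)` (junk value `μ` when undefined). -/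
noncomputable def filterStep {E F : Type*} (M : F → E → E → ℝ) (μ : ProbVec E) (y : F) :
    ProbVec E := by
  classical
  exact if h : ∃ ν : ProbVec E, ∀ j,
      (ν : E → ℝ) j * rowTot (rowMul M (μ : E → ℝ) y) = rowMul M (μ : E → ℝ) y j
    then h.choose else μ

/-- The filter `μM(y₁)⋯M(yₙ)/(μM(y₁)⋯M(yₙ)1)` (junk value `μ` when undefined). -/
noncomputable def filterList {E F : Type*} (M : F → E → E → ℝ) (μ : ProbVec E) (ys : List F) :
    ProbVec E := by
  classical
  exact if h : ∃ ν : ProbVec E, ∀ j,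
      (ν : E → ℝ) j * rowTot (rowIter M (μ : E → ℝ) ys) = rowIter M (μ : E → ℝ) ys j
    then h.choose else μ

/-- The filter `π_n^μ(y)` as a function of the observation path `y : ℕ → F`
(the coordinate `y k` represents the observation `y_{k+1}`). -/
noncomputable def filterSeq {E F : Type*} (M : F → E → E → ℝ) (μ : ProbVec E) (y : ℕ → F)
    (n : ℕ) : ProbVec E :=
  filterList M μ (List.ofFn fun k : Fin n => y k)

/-- The filter transition kernel `Π`, acting on functions:
`Πf(μ) = ∫ f(μM(y)/(μM(y)1)) ⬝ (μM(y)1) φ(dy)`. -/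
noncomputable def filterKernel {E F : Type*} [MeasurableSpace F] (M : F → E → E → ℝ)
    (φ : Measure F) (f : ProbVec E → ℝ) (μ : ProbVec E) : ℝ :=
  ∫ y, f (filterStep M μ y) * rowTot (rowMul M (μ : E → ℝ) y) ∂φ

/-- Bounded continuous real functions on `P(E)`. -/
def IsBddCont {E : Type*} (f : ProbVec E → ℝ) : Prop :=
  Continuous f ∧ ∃ C : ℝ, ∀ μ, |f μ| ≤ C

/-- A probability measure `𝕄` on `P(E)` is `Π`-invariant if `∫ Πf d𝕄 = ∫ f d𝕄`
for every bounded continuous `f`. -/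
def IsPiInvariant {E F : Type*} [MeasurableSpace F] (M : F → E → E → ℝ) (φ : Measure F)
    (𝕄 : ProbabilityMeasure (ProbVec E)) : Prop :=
  ∀ f : ProbVec E → ℝ, IsBddCont f →
    ∫ μ, filterKernel M φ f μ ∂(𝕄 : Measure (ProbVec E)) =
      ∫ μ, f μ ∂(𝕄 : Measure (ProbVec E))

/-- The signal transition matrix `P_{ij} = ∫ M_{ij}(y) φ(dy)`. -/
noncomputable def transMat {E F : Type*} [MeasurableSpace F] (M : F → E → E → ℝ)
    (φ : Measure F) : E → E → ℝ :=
  fun i j => ∫ y, M y i j ∂φ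

/-- Powers of a transition matrix on a countable state space. -/
noncomputable def matPow {E : Type*} [DecidableEq E] (P : E → E → ℝ) : ℕ → E → E → ℝ
  | 0 => fun i j => if i = j then 1 else 0
  | n + 1 => fun i j => ∑' k, matPow P n i k * P k j

set_option linter.unusedSectionVars false

section Gen
variable {Ω F : Type*} [MeasurableSpace Ω] [MeasurableSpace F]

/-- transfer operator -/
noncomputable def Sop (φ : Measure F) (T : F → Ω → Ω) (h : Ω → ℝ≥0∞) : Ω → ℝ≥0∞ :=
  fun x => ∫⁻ y, h (T y x) ∂φ

variable {φ : Measure F} [SigmaFinite φ] {T : F → Ω → Ω}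

lemma Sop_meas (hT : Measurable fun z : Ω × F => T z.2 z.1) {h : Ω → ℝ≥0∞} (hh : Measurable h) :
    Measurable (Sop φ T h) :=
  Measurable.lintegral_prod_right' (f := fun z : Ω × F => h (T z.2 z.1)) (hh.comp hT)

lemma Sit_meas (hT : Measurable fun z : Ω × F => T z.2 z.1) {h : Ω → ℝ≥0∞} (hh : Measurable h)
    (n : ℕ) : Measurable ((Sop φ T)^[n] h) := by
  induction n with
  | zero => exact hh
  | succ n ih => rw [Function.iterate_succ_apply']; exact Sop_meas hT ih

lemma Sit_mono_on {D : Ω → Prop} (hD : ∀ y x, D x → D (T y x)) {h g : Ω → ℝ≥0∞}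
    (hle : ∀ x, D x → h x ≤ g x) (n : ℕ) (x : Ω) (hx : D x) :
    (Sop φ T)^[n] h x ≤ (Sop φ T)^[n] g x := by
  induction n generalizing x with
  | zero => exact hle x hx
  | succ n ih =>
    rw [Function.iterate_succ_apply', Function.iterate_succ_apply']
    exact lintegral_mono fun y => ih _ (hD y x hx)

lemma Sit_congr_on {D : Ω → Prop} (hD : ∀ y x, D x → D (T y x)) {h g : Ω → ℝ≥0∞}
    (hle : ∀ x, D x → h x = g x) (n : ℕ) (x : Ω) (hx : D x) :
    (Sop φ T)^[n] h x = (Sop φ T)^[n] g x :=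
  le_antisymm (Sit_mono_on hD (fun x hx => (hle x hx).le) n x hx)
    (Sit_mono_on hD (fun x hx => (hle x hx).ge) n x hx)

lemma Sit_add (hT : Measurable fun z : Ω × F => T z.2 z.1) {h g : Ω → ℝ≥0∞} (hh : Measurable h)
    (n : ℕ) (x : Ω) :
    (Sop φ T)^[n] (fun x => h x + g x) x = (Sop φ T)^[n] h x + (Sop φ T)^[n] g x := by
  induction n generalizing x with
  | zero => rfl
  | succ n ih =>
    simp only [Function.iterate_succ_apply']
    have : (Sop φ T)^[n] (fun x => h x + g x) =
      fun x => (Sop φ T)^[n] h x + (Sop φ T)^[n] g x := funext ih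
    rw [this]
    exact lintegral_add_left ((Sit_meas hT hh n).comp (hT.comp measurable_prodMk_left)) _

lemma Sit_const_mul (hT : Measurable fun z : Ω × F => T z.2 z.1) {h : Ω → ℝ≥0∞}
    (hh : Measurable h) (c : ℝ≥0∞) (n : ℕ) (x : Ω) :
    (Sop φ T)^[n] (fun x => c * h x) x = c * (Sop φ T)^[n] h x := by
  induction n generalizing x with
  | zero => rfl
  | succ n ih =>
    simp only [Function.iterate_succ_apply']
    have : (Sop φ T)^[n] (fun x => c * h x) =
      fun x => c * (Sop φ T)^[n] h x := funext ih
    rw [this]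
    exact lintegral_const_mul _ ((Sit_meas hT hh n).comp (hT.comp measurable_prodMk_left))

lemma Sit_comap {Ω' : Type*} {T' : F → Ω' → Ω'} (π : Ω' → Ω)
    (hπ : ∀ y x, π (T' y x) = T y (π x)) (h : Ω → ℝ≥0∞) (n : ℕ) (x : Ω') :
    (Sop φ T')^[n] (fun x => h (π x)) x = (Sop φ T)^[n] h (π x) := by
  induction n generalizing x with
  | zero => rfl
  | succ n ih =>
    simp only [Function.iterate_succ_apply']
    refine lintegral_congr fun y => ?_
    rw [ih, hπ]

end Gen

section Row
variable {E F : Type*} [Fintype E] [MeasurableSpace F]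

/-- one-vector dynamics -/
noncomputable def T1 (M : F → E → E → ℝ) (y : F) (p : E → ℝ) : E → ℝ := rowMul M p y

/-- two-vector dynamics -/
noncomputable def T2 (M : F → E → E → ℝ) (y : F) (x : (E → ℝ) × (E → ℝ)) :
    (E → ℝ) × (E → ℝ) := (rowMul M x.1 y, rowMul M x.2 y)

lemma rowMul_apply (M : F → E → E → ℝ) (p : E → ℝ) (y : F) (j : E) :
    rowMul M p y j = ∑ i, p i * M y i j := tsum_fintype _

lemma rowTot_eq (p : E → ℝ) : rowTot p = ∑ i, p i := tsum_fintype _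

variable {φ : Measure F} [SigmaFinite φ] {M : F → E → E → ℝ}

lemma T1_meas (hMmeas : ∀ i j, Measurable fun y => M y i j) :
    Measurable fun z : (E → ℝ) × F => T1 M z.2 z.1 := by
  refine measurable_pi_lambda _ fun j => ?_
  simp only [T1, rowMul_apply]
  refine Finset.measurable_sum _ fun i _ => ?_
  exact ((measurable_pi_apply i).comp measurable_fst).mul ((hMmeas i j).comp measurable_snd)

lemma T2_meas (hMmeas : ∀ i j, Measurable fun y => M y i j) :
    Measurable fun z : ((E → ℝ) × (E → ℝ)) × F => T2 M z.2 z.1 := by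
  have h := T1_meas hMmeas
  exact (h.comp ((measurable_fst.comp measurable_fst).prodMk measurable_snd)).prodMk
    (h.comp ((measurable_snd.comp measurable_fst).prodMk measurable_snd))

lemma rowMul_nonneg (hMnn : ∀ y i j, 0 ≤ M y i j) {p : E → ℝ} (hp : ∀ i, 0 ≤ p i) (y : F) (j : E) :
    0 ≤ rowMul M p y j := by
  rw [rowMul_apply]; exact Finset.sum_nonneg fun i _ => mul_nonneg (hp i) (hMnn y i j)

lemma rowMul_lin (a b : ℝ) (p q : E → ℝ) (y : F) :
    rowMul M (fun i => a * p i + b * q i) y =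
      fun j => a * rowMul M p y j + b * rowMul M q y j := by
  funext j
  simp only [rowMul_apply, Finset.mul_sum, ← Finset.sum_add_distrib]
  exact Finset.sum_congr rfl fun i _ => by ring

lemma rowMul_integrable (hint : ∀ i j, Integrable (fun y => M y i j) φ) (p : E → ℝ) (j : E) :
    Integrable (fun y => rowMul M p y j) φ := by
  simp only [rowMul_apply]
  exact integrable_finsetSum _ fun i _ => (hint i j).const_mul _

lemma rowMul_integral (hint : ∀ i j, Integrable (fun y => M y i j) φ) (p : E → ℝ) (j : E) :
    ∫ y, rowMul M p y j ∂φ = ∑ i, p i * transMat M φ i j := by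
  simp only [rowMul_apply]
  rw [integral_finsetSum _ fun i _ => (hint i j).const_mul _]
  simp only [integral_const_mul, transMat]

lemma tot_integrable (hint : ∀ i j, Integrable (fun y => M y i j) φ) (p : E → ℝ) :
    Integrable (fun y => ∑ j, rowMul M p y j) φ :=
  integrable_finsetSum _ fun j _ => rowMul_integrable hint p j

lemma tot_integral (hint : ∀ i j, Integrable (fun y => M y i j) φ)
    (hP : ∀ i, ∑ j, transMat M φ i j = 1) (p : E → ℝ) :
    ∫ y, ∑ j, rowMul M p y j ∂φ = ∑ i, p i := by
  rw [integral_finsetSum _ fun j _ => rowMul_integrable hint p j]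
  simp only [rowMul_integral hint]
  rw [Finset.sum_comm]
  simp only [← Finset.mul_sum, hP, mul_one]

/-- total mass as extended nonneg real -/
noncomputable def mass (p : E → ℝ) : ℝ≥0∞ := ENNReal.ofReal (∑ i, p i)

lemma mass_meas : Measurable (mass (E := E)) :=
  ENNReal.measurable_ofReal.comp (Finset.measurable_sum _ fun i _ => measurable_pi_apply i)

lemma S_mass (hMnn : ∀ y i j, 0 ≤ M y i j) (hint : ∀ i j, Integrable (fun y => M y i j) φ)
    (hP : ∀ i, ∑ j, transMat M φ i j = 1) {p : E → ℝ} (hp : ∀ i, 0 ≤ p i) :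
    Sop φ (T1 M) mass p = mass p := by
  rw [mass, ← tot_integral hint hP p, ofReal_integral_eq_lintegral_ofReal (tot_integrable hint p)
    (ae_of_all _ fun y => Finset.sum_nonneg fun j _ => rowMul_nonneg hMnn hp y j)]
  rfl

lemma Sit_mass (hMnn : ∀ y i j, 0 ≤ M y i j) (hint : ∀ i j, Integrable (fun y => M y i j) φ)
    (hP : ∀ i, ∑ j, transMat M φ i j = 1) {p : E → ℝ} (hp : ∀ i, 0 ≤ p i) (n : ℕ) :
    (Sop φ (T1 M))^[n] mass p = mass p := by
  induction n generalizing p with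
  | zero => rfl
  | succ n ih =>
    rw [Function.iterate_succ_apply', ← S_mass hMnn hint hP hp]
    exact lintegral_congr fun y => ih (rowMul_nonneg hMnn hp y)

end Row

section Pair
variable {E F : Type*} [Fintype E] [MeasurableSpace F]
  {φ : Measure F} [SigmaFinite φ] {M : F → E → E → ℝ}

/-- domination domain -/
def DD (K : ℝ) (x : (E → ℝ) × (E → ℝ)) : Prop :=
  (∀ i, 0 ≤ x.1 i) ∧ (∀ i, 0 ≤ x.2 i) ∧ ∀ i, x.1 i ≤ K * x.2 i

lemma DD_T2 (hMnn : ∀ y i j, 0 ≤ M y i j) {K : ℝ} (y : F) (x : (E → ℝ) × (E → ℝ))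
    (hx : DD K x) : DD K (T2 M y x) := by
  refine ⟨rowMul_nonneg hMnn hx.1 y, rowMul_nonneg hMnn hx.2.1 y, fun j => ?_⟩
  simp only [T2, rowMul_apply, Finset.mul_sum]
  refine Finset.sum_le_sum fun i _ => ?_
  rw [← mul_assoc]
  exact mul_le_mul_of_nonneg_right (hx.2.2 i) (hMnn y i j)

lemma DD_sum {K : ℝ} {x : (E → ℝ) × (E → ℝ)} (hx : DD K x) :
    0 ≤ ∑ i, x.1 i ∧ 0 ≤ ∑ i, x.2 i ∧ ∑ i, x.1 i ≤ K * ∑ i, x.2 i := by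
  refine ⟨Finset.sum_nonneg fun i _ => hx.1 i, Finset.sum_nonneg fun i _ => hx.2.1 i, ?_⟩
  rw [Finset.mul_sum]; exact Finset.sum_le_sum fun i _ => hx.2.2 i

/-- quadratic potential -/
noncomputable def VV (x : (E → ℝ) × (E → ℝ)) : ℝ≥0∞ :=
  ENNReal.ofReal ((∑ i, x.1 i) ^ 2 / ∑ i, x.2 i)

/-- quadratic defect -/
noncomputable def Dq (l : ℝ) (x : (E → ℝ) × (E → ℝ)) : ℝ≥0∞ :=
  ENNReal.ofReal ((∑ i, x.2 i) * ((∑ i, x.1 i) / (∑ i, x.2 i) - l) ^ 2)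

lemma sum1_meas : Measurable fun x : (E → ℝ) × (E → ℝ) => ∑ i, x.1 i :=
  Finset.measurable_sum _ fun i _ => (measurable_pi_apply i).comp measurable_fst

lemma sum2_meas : Measurable fun x : (E → ℝ) × (E → ℝ) => ∑ i, x.2 i :=
  Finset.measurable_sum _ fun i _ => (measurable_pi_apply i).comp measurable_snd

lemma VV_meas : Measurable (VV (E := E)) :=
  ENNReal.measurable_ofReal.comp ((sum1_meas.pow_const 2).div sum2_meas)

lemma Dq_meas (l : ℝ) : Measurable (Dq (E := E) l) :=
  ENNReal.measurable_ofReal.comp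
    (sum2_meas.mul (((sum1_meas.div sum2_meas).sub measurable_const).pow_const 2))

lemma V_id {K l : ℝ} (hl : 0 ≤ l) {x : (E → ℝ) × (E → ℝ)} (hx : DD K x) :
    VV x + ENNReal.ofReal (l ^ 2) * mass x.2 = Dq l x + ENNReal.ofReal (2 * l) * mass x.1 := by
  obtain ⟨h1, h2, h3⟩ := DD_sum hx
  unfold VV mass Dq
  set a := ∑ i, x.1 i
  set b := ∑ i, x.2 i
  rw [← ENNReal.ofReal_mul (by positivity), ← ENNReal.ofReal_mul (by positivity),
    ← ENNReal.ofReal_add (by positivity) (by positivity),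
    ← ENNReal.ofReal_add (by positivity) (by positivity)]
  congr 1
  rcases eq_or_ne b 0 with hb | hb
  · have : a = 0 := le_antisymm (by simpa [hb] using h3) h1
    simp [hb, this]
  · field_simp; ring

lemma Sit_mass1 (hMnn : ∀ y i j, 0 ≤ M y i j) (hint : ∀ i j, Integrable (fun y => M y i j) φ)
    (hP : ∀ i, ∑ j, transMat M φ i j = 1) {x : (E → ℝ) × (E → ℝ)} (hp : ∀ i, 0 ≤ x.1 i) (n : ℕ) :
    (Sop φ (T2 M))^[n] (fun x => mass x.1) x = mass x.1 := by
  rw [Sit_comap (T := T1 M) (fun x : (E → ℝ) × (E → ℝ) => x.1) (fun y x => rfl),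
    Sit_mass hMnn hint hP hp]

lemma Sit_mass2 (hMnn : ∀ y i j, 0 ≤ M y i j) (hint : ∀ i j, Integrable (fun y => M y i j) φ)
    (hP : ∀ i, ∑ j, transMat M φ i j = 1) {x : (E → ℝ) × (E → ℝ)} (hp : ∀ i, 0 ≤ x.2 i) (n : ℕ) :
    (Sop φ (T2 M))^[n] (fun x => mass x.2) x = mass x.2 := by
  rw [Sit_comap (T := T1 M) (fun x : (E → ℝ) × (E → ℝ) => x.2) (fun y x => rfl),
    Sit_mass hMnn hint hP hp]

lemma Sit_V (hMmeas : ∀ i j, Measurable fun y => M y i j)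
    (hMnn : ∀ y i j, 0 ≤ M y i j) (hint : ∀ i j, Integrable (fun y => M y i j) φ)
    (hP : ∀ i, ∑ j, transMat M φ i j = 1) {K : ℝ} {x : (E → ℝ) × (E → ℝ)} (hx : DD K x) (n : ℕ) :
    (Sop φ (T2 M))^[n] VV x =
      (Sop φ (T2 M))^[n] (Dq ((∑ i, x.1 i) / ∑ i, x.2 i)) x + VV x := by
  obtain ⟨h1, h2, h3⟩ := DD_sum hx
  set l := (∑ i, x.1 i) / ∑ i, x.2 i with hl
  have hl0 : 0 ≤ l := by positivity
  have hT := T2_meas hMmeas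
  have m1 : Measurable fun x : (E → ℝ) × (E → ℝ) => mass x.1 := mass_meas.comp measurable_fst
  have m2 : Measurable fun x : (E → ℝ) × (E → ℝ) => mass x.2 := mass_meas.comp measurable_snd
  have key := Sit_congr_on (φ := φ) (T := T2 M) (D := DD K) (DD_T2 hMnn)
    (h := fun x => VV x + ENNReal.ofReal (l ^ 2) * mass x.2)
    (g := fun x => Dq l x + ENNReal.ofReal (2 * l) * mass x.1) (fun x hx => V_id hl0 hx) n x hx
  rw [Sit_add hT VV_meas, Sit_add hT (Dq_meas l), Sit_const_mul hT m1, Sit_const_mul hT m2,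
    Sit_mass1 hMnn hint hP hx.1, Sit_mass2 hMnn hint hP hx.2.1] at key
  have e1 : ENNReal.ofReal (l ^ 2) * mass x.2 = VV x := by
    unfold mass VV
    rw [← ENNReal.ofReal_mul (by positivity)]
    congr 1
    rcases eq_or_ne (∑ i, x.2 i) 0 with hb | hb
    · simp [hb]
    · rw [hl]; field_simp
  have e2 : ENNReal.ofReal (2 * l) * mass x.1 = VV x + VV x := by
    unfold mass VV
    rw [← ENNReal.ofReal_mul (by positivity), ← ENNReal.ofReal_add (by positivity) (by positivity)]
    congr 1
    rcases eq_or_ne (∑ i, x.2 i) 0 with hb | hb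
    · simp [hb, hl]
    · rw [hl]; field_simp; ring
  rw [e1, e2, ← add_assoc] at key
  exact (ENNReal.add_left_inj ENNReal.ofReal_ne_top).1 key

/-- seminorms `ρ_N` -/
noncomputable def rho (φ : Measure F) (M : F → E → E → ℝ) (n : ℕ) (v : E → ℝ) : ℝ≥0∞ :=
  (Sop φ (T1 M))^[n] (fun v => ‖∑ i, v i‖ₑ) v

lemma rho_le_D (hMmeas : ∀ i j, Measurable fun y => M y i j)
    (hMnn : ∀ y i j, 0 ≤ M y i j) (hint : ∀ i j, Integrable (fun y => M y i j) φ)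
    (hP : ∀ i, ∑ j, transMat M φ i j = 1) {K : ℝ} {x : (E → ℝ) × (E → ℝ)} (hx : DD K x) (n : ℕ)
    (l : ℝ) (δ : ℝ) (hδ : 0 < δ) :
    rho φ M n (fun i => 1 * x.1 i + (-l) * x.2 i) ≤
      ENNReal.ofReal δ * mass x.2 +
        ENNReal.ofReal (1 / (4 * δ)) * (Sop φ (T2 M))^[n] (Dq l) x := by
  have hT := T2_meas hMmeas
  have m2 : Measurable fun x : (E → ℝ) × (E → ℝ) => mass x.2 := mass_meas.comp measurable_snd
  have h1 := Sit_comap (φ := φ) (T := T1 M) (T' := T2 M)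
    (fun x : (E → ℝ) × (E → ℝ) => fun i => 1 * x.1 i + (-l) * x.2 i)
    (fun y x => (rowMul_lin 1 (-l) x.1 x.2 y).symm) (fun v => ‖∑ i, v i‖ₑ) n x
  rw [rho, ← h1, ← Sit_mass2 (φ := φ) hMnn hint hP hx.2.1 n, ← Sit_const_mul hT m2,
    ← Sit_const_mul hT (Dq_meas l), ← Sit_add hT (m2.const_mul _)]
  refine Sit_mono_on (D := DD K) (DD_T2 hMnn) (fun x hx => ?_) n x hx
  obtain ⟨h1, h2, h3⟩ := DD_sum hx
  have hs : ∑ i, (1 * x.1 i + (-l) * x.2 i) = (∑ i, x.1 i) + (-l) * ∑ i, x.2 i := by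
    rw [Finset.sum_add_distrib, Finset.mul_sum]; simp
  simp only [hs]
  unfold mass Dq
  set a := ∑ i, x.1 i
  set b := ∑ i, x.2 i
  rw [← ENNReal.ofReal_mul (by positivity), ← ENNReal.ofReal_mul (by positivity),
    ← ENNReal.ofReal_add (by positivity) (by positivity), ← ofReal_norm]
  apply ENNReal.ofReal_le_ofReal
  rw [Real.norm_eq_abs]
  rcases eq_or_ne b 0 with hb | hb
  · have : a = 0 := le_antisymm (by simpa [hb] using h3) h1
    simp [hb, this]
  · have : a + -l * b = b * (a / b - l) := by field_simp; ring
    rw [this, abs_mul, abs_of_nonneg h2]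
    set t := a / b - l
    have h4 : |t| ≤ δ + 1 / (4 * δ) * t ^ 2 := by
      have : δ + 1 / (4 * δ) * t ^ 2 - |t| = 1 / (4 * δ) * (|t| - 2 * δ) ^ 2 := by
        rw [← sq_abs t]; field_simp; ring
      have : 0 ≤ 1 / (4 * δ) * (|t| - 2 * δ) ^ 2 := by positivity
      linarith
    calc b * |t| ≤ b * (δ + 1 / (4 * δ) * t ^ 2) := by gcongr
      _ = _ := by ring

end Pair
set_option linter.unusedSectionVars false

section Rho
variable {E F : Type*} [Fintype E] [MeasurableSpace F]
  {φ : Measure F} [SigmaFinite φ] {M : F → E → E → ℝ}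

lemma enormsum_meas : Measurable fun v : E → ℝ => ‖∑ i, v i‖ₑ :=
  (Finset.measurable_sum _ fun i _ => measurable_pi_apply i).enorm

lemma rho_lin (hMmeas : ∀ i j, Measurable fun y => M y i j) (n : ℕ) (a b : ℝ) (v w : E → ℝ) :
    rho φ M n (fun i => a * v i + b * w i) ≤ ‖a‖ₑ * rho φ M n v + ‖b‖ₑ * rho φ M n w := by
  have hT := T2_meas hMmeas
  have h1 := Sit_comap (φ := φ) (T := T1 M) (T' := T2 M)
    (fun x : (E → ℝ) × (E → ℝ) => fun i => a * x.1 i + b * x.2 i)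
    (fun y x => (rowMul_lin a b x.1 x.2 y).symm) (fun v => ‖∑ i, v i‖ₑ) n (v, w)
  have h2 := Sit_comap (φ := φ) (T := T1 M) (T' := T2 M)
    (fun x : (E → ℝ) × (E → ℝ) => x.1) (fun y x => rfl) (fun v => ‖∑ i, v i‖ₑ) n (v, w)
  have h3 := Sit_comap (φ := φ) (T := T1 M) (T' := T2 M)
    (fun x : (E → ℝ) × (E → ℝ) => x.2) (fun y x => rfl) (fun v => ‖∑ i, v i‖ₑ) n (v, w)
  have m1 : Measurable fun x : (E → ℝ) × (E → ℝ) => ‖∑ i, x.1 i‖ₑ := sum1_meas.enorm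
  have m2 : Measurable fun x : (E → ℝ) × (E → ℝ) => ‖∑ i, x.2 i‖ₑ := sum2_meas.enorm
  unfold rho
  rw [← h1, ← h2, ← h3, ← Sit_const_mul hT m1, ← Sit_const_mul hT m2,
    ← Sit_add hT (m1.const_mul _)]
  refine Sit_mono_on (D := fun _ => True) (fun _ _ _ => trivial) (fun x _ => ?_) n _ trivial
  have hs : ∑ i, (a * x.1 i + b * x.2 i) = a * (∑ i, x.1 i) + b * ∑ i, x.2 i := by
    rw [Finset.sum_add_distrib, Finset.mul_sum, Finset.mul_sum]
  simp only [hs]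
  refine (enorm_add_le _ _).trans ?_
  rw [enorm_mul, enorm_mul]

lemma rho_nonneg (hMnn : ∀ y i j, 0 ≤ M y i j) (hint : ∀ i j, Integrable (fun y => M y i j) φ)
    (hP : ∀ i, ∑ j, transMat M φ i j = 1) {p : E → ℝ} (hp : ∀ i, 0 ≤ p i) (n : ℕ) :
    rho φ M n p = mass p := by
  rw [← Sit_mass (φ := φ) hMnn hint hP hp n, rho]
  refine Sit_congr_on (D := fun p : E → ℝ => ∀ i, 0 ≤ p i)
    (fun y x hx => rowMul_nonneg (p := x) hMnn hx y)
    (fun x hx => ?_) n p hp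
  rw [mass, Real.enorm_eq_ofReal (Finset.sum_nonneg fun i _ => hx i)]

lemma rho_le (hMmeas : ∀ i j, Measurable fun y => M y i j)
    (hMnn : ∀ y i j, 0 ≤ M y i j) (hint : ∀ i j, Integrable (fun y => M y i j) φ)
    (hP : ∀ i, ∑ j, transMat M φ i j = 1) (v : E → ℝ) (n : ℕ) :
    rho φ M n v ≤ ENNReal.ofReal ((2 * Fintype.card E : ℝ) * ‖v‖) := by
  have h0 : v = fun i => 1 * max (v i) 0 + (-1) * max (-v i) 0 := by
    funext i
    rcases le_total 0 (v i) with h | h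
    · simp [h]
    · simp [h]
  have h := rho_lin (φ := φ) hMmeas n 1 (-1) (fun i => max (v i) 0) (fun i => max (-v i) 0)
  rw [← h0, rho_nonneg hMnn hint hP (fun i => le_max_right _ _),
    rho_nonneg hMnn hint hP (fun i => le_max_right _ _)] at h
  simp only [enorm_one, one_mul, enorm_neg] at h
  refine h.trans ?_
  unfold mass
  rw [← ENNReal.ofReal_add (Finset.sum_nonneg fun i _ => le_max_right _ _)
    (Finset.sum_nonneg fun i _ => le_max_right _ _)]
  apply ENNReal.ofReal_le_ofReal
  have b1 : ∑ i, max (v i) 0 ≤ ∑ i : E, ‖v‖ := Finset.sum_le_sum fun i _ =>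
    max_le ((le_abs_self _).trans (norm_le_pi_norm v i)) (norm_nonneg _)
  have b2 : ∑ i, max (-v i) 0 ≤ ∑ i : E, ‖v‖ := Finset.sum_le_sum fun i _ =>
    max_le ((neg_le_abs _).trans (norm_le_pi_norm v i)) (norm_nonneg _)
  simp only [Finset.sum_const, Finset.card_univ, nsmul_eq_mul] at b1 b2
  linarith

lemma rho_mono (hint : ∀ i j, Integrable (fun y => M y i j) φ)
    (hP : ∀ i, ∑ j, transMat M φ i j = 1) (v : E → ℝ) :
    Monotone fun n => rho φ M n v := by
  refine monotone_nat_of_le_succ fun n => ?_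
  unfold rho
  rw [Function.iterate_succ_apply]
  refine Sit_mono_on (D := fun _ => True) (fun _ _ _ => trivial) (fun x _ => ?_) n _ trivial
  rw [← tot_integral hint hP x]
  exact enorm_integral_le_lintegral_enorm _

lemma rho_bound [Nonempty E] (hMmeas : ∀ i j, Measurable fun y => M y i j)
    (hMnn : ∀ y i j, 0 ≤ M y i j) (hint : ∀ i j, Integrable (fun y => M y i j) φ)
    (hP : ∀ i, ∑ j, transMat M φ i j = 1)
    (hinj : ∀ v : E → ℝ, (∀ n, rho φ M n v = 0) → v = 0) :
    ∃ N : ℕ, ∃ c : ℝ, 0 < c ∧ ∀ v : E → ℝ, ENNReal.ofReal (c * ‖v‖) ≤ rho φ M N v := by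
  have hfin : ∀ n v, rho φ M n v ≠ ⊤ := fun n v =>
    ((rho_le hMmeas hMnn hint hP v n).trans_lt ENNReal.ofReal_lt_top).ne
  set r : ℕ → (E → ℝ) → ℝ := fun n v => (rho φ M n v).toReal with hr
  have hcont : ∀ n, Continuous (r n) := fun n => by
    refine (LipschitzWith.of_le_add_mul (2 * Fintype.card E : NNReal) fun x y => ?_).continuous
    have h0 : x = fun i => 1 * y i + 1 * (x - y) i := by funext i; simp
    have h := rho_lin (φ := φ) hMmeas n 1 1 y (x - y)
    rw [← h0] at h
    simp only [enorm_one, one_mul] at h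
    have h' := h.trans (add_le_add_right (rho_le hMmeas hMnn hint hP (x - y) n) _)
    have := ENNReal.toReal_mono (by finiteness [hfin n y]) h'
    rw [ENNReal.toReal_add (hfin n y) ENNReal.ofReal_ne_top,
      ENNReal.toReal_ofReal (by positivity)] at this
    rw [dist_eq_norm]
    simpa [hr] using this
  have hcpt : IsCompact (Metric.sphere (0 : E → ℝ) 1) := isCompact_sphere _ _
  obtain ⟨N, hN⟩ := hcpt.elim_directed_cover (fun n => {v | 0 < r n v})
    (fun n => isOpen_lt continuous_const (hcont n)) (by
      intro v hv
      rw [Set.mem_iUnion]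
      by_contra hcon
      push Not at hcon
      have : v = 0 := hinj v fun n => by
        have := hcon n
        simp only [Set.mem_ofPred_eq, not_lt] at this
        have h0 : r n v = 0 := le_antisymm this ENNReal.toReal_nonneg
        exact ((ENNReal.toReal_eq_zero_iff _).1 h0).resolve_right (hfin n v)
      simp [this] at hv)
    (by
      refine Monotone.directed_le fun m n hmn v hv => ?_
      exact lt_of_lt_of_le hv (ENNReal.toReal_mono (hfin n v) (rho_mono hint hP v hmn)))
  have hne : (Metric.sphere (0 : E → ℝ) 1).Nonempty := NormedSpace.sphere_nonempty.2 zero_le_one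
  obtain ⟨v0, hv0, hmin⟩ := hcpt.exists_isMinOn hne (hcont N).continuousOn
  refine ⟨N, r N v0, hN hv0, fun v => ?_⟩
  rcases eq_or_ne v 0 with rfl | hv
  · simp
  have hvn : 0 < ‖v‖ := norm_pos_iff.2 hv
  have hu : (fun i => ‖v‖⁻¹ * v i + 0 * v i) ∈ Metric.sphere (0 : E → ℝ) 1 := by
    have : (fun i => ‖v‖⁻¹ * v i + 0 * v i) = ‖v‖⁻¹ • v := by funext i; simp
    rw [this]
    simp [norm_smul, hvn.ne']
  have h1 : r N v0 ≤ r N _ := hmin hu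
  have h2 := rho_lin (φ := φ) hMmeas N ‖v‖⁻¹ 0 v v
  simp only [enorm_zero, zero_mul, add_zero] at h2
  simp only [zero_mul, add_zero] at h1
  have h3 : r N v0 ≤ ‖v‖⁻¹ * r N v := by
    refine h1.trans ?_
    have := ENNReal.toReal_mono (ENNReal.mul_ne_top (by simp) (hfin N v)) h2
    rw [ENNReal.toReal_mul] at this
    simpa using this
  rw [ENNReal.ofReal_le_iff_le_toReal (hfin N v)]
  calc r N v0 * ‖v‖ ≤ (‖v‖⁻¹ * r N v) * ‖v‖ := by gcongr
    _ = r N v := by field_simp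

lemma rowIter_cons (p : E → ℝ) (y : F) (ys : List F) :
    rowIter M p (y :: ys) = rowIter M (rowMul M p y) ys := rfl

lemma rowIter_meas (hMmeas : ∀ i j, Measurable fun y => M y i j) (n : ℕ) :
    Measurable fun z : (E → ℝ) × (Fin n → F) => rowIter M z.1 (List.ofFn z.2) := by
  induction n with
  | zero => simpa [rowIter] using measurable_fst
  | succ n ih =>
    simp only [List.ofFn_succ, rowIter_cons]
    have h1 : Measurable fun z : (E → ℝ) × (Fin (n+1) → F) => rowMul M z.1 (z.2 0) :=
      (T1_meas hMmeas).comp (measurable_fst.prodMk ((measurable_pi_apply 0).comp measurable_snd))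
    have h2 : Measurable fun z : (E → ℝ) × (Fin (n+1) → F) => fun i : Fin n => z.2 i.succ :=
      measurable_pi_lambda _ fun i => (measurable_pi_apply _).comp measurable_snd
    exact ih.comp (h1.prodMk h2)

lemma lintegral_rowIter (hMmeas : ∀ i j, Measurable fun y => M y i j) {g : (E → ℝ) → ℝ≥0∞}
    (hg : Measurable g) (n : ℕ) (p : E → ℝ) :
    ∫⁻ v : Fin n → F, g (rowIter M p (List.ofFn v)) ∂(Measure.pi fun _ => φ) =
      (Sop φ (T1 M))^[n] g p := by
  induction n generalizing p with
  | zero =>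
    simp [rowIter]
  | succ n ih =>
    have hmp := (measurePreserving_piFinSuccAbove (fun _ : Fin (n+1) => φ) 0).symm
    rw [← hmp.lintegral_comp_emb (MeasurableEquiv.measurableEmbedding _)]
    have hm : Measurable fun z : F × (Fin n → F) =>
        g (rowIter M (rowMul M p z.1) (List.ofFn z.2)) :=
      hg.comp ((rowIter_meas hMmeas n).comp
        (((T1_meas hMmeas).comp (measurable_const.prodMk measurable_fst)).prodMk measurable_snd))
    rw [Function.iterate_succ_apply', Sop]
    simp only [MeasurableEquiv.piFinSuccAbove_symm_apply, Fin.insertNthEquiv,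
      Fin.insertNth_zero, Equiv.coe_fn_mk, List.ofFn_succ, Fin.cons_zero, Fin.cons_succ,
      rowIter_cons, cast_eq]
    rw [lintegral_prod _ hm.aemeasurable]
    exact lintegral_congr fun y => ih (rowMul M p y)

lemma rowIter_sub (a b : ℝ) (p q : E → ℝ) (ys : List F) :
    rowIter M (fun i => a * p i + b * q i) ys =
      fun i => a * rowIter M p ys i + b * rowIter M q ys i := by
  induction ys generalizing p q with
  | nil => rfl
  | cons y ys ih => rw [rowIter_cons, rowMul_lin, ih]; rfl

end Rho
set_option linter.unusedSectionVars false

section Filt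
variable {E F : Type*} [Fintype E] [MeasurableSpace F]
  {φ : Measure F} [SigmaFinite φ] {M : F → E → E → ℝ}

lemma pv_sum (μ : ProbVec E) : ∑ i, (μ : E → ℝ) i = 1 := by
  have := μ.2.2.tsum_eq
  rwa [tsum_fintype] at this

lemma pv_le_one (μ : ProbVec E) (i : E) : (μ : E → ℝ) i ≤ 1 := by
  exact (Finset.single_le_sum (f := (μ : E → ℝ)) (fun i _ => μ.2.1 i)
    (Finset.mem_univ i)).trans_eq (pv_sum μ)

/-- build a probability vector -/
def mkPV (p : E → ℝ) (h0 : ∀ i, 0 ≤ p i) (h1 : ∑ i, p i = 1) : ProbVec E :=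
  ⟨p, h0, by rw [← h1]; exact hasSum_fintype p⟩

instance pv_compact : CompactSpace (ProbVec E) := by
  have hset : {p : E → ℝ | (∀ i, 0 ≤ p i) ∧ HasSum p 1} =
      {p | ∀ i, 0 ≤ p i} ∩ {p | ∑ i, p i = 1} := by
    ext p
    constructor
    · rintro ⟨h0, h1⟩
      refine ⟨h0, ?_⟩
      have := h1.tsum_eq
      rwa [tsum_fintype] at this
    · rintro ⟨h0, h1⟩
      exact (mkPV p h0 h1).2
  suffices IsCompact {p : E → ℝ | (∀ i, 0 ≤ p i) ∧ HasSum p 1} from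
    isCompact_iff_compactSpace.1 this
  refine IsCompact.of_isClosed_subset (isCompact_Icc (a := (0 : E → ℝ)) (b := 1)) ?_ ?_
  · rw [hset]
    refine IsClosed.inter ?_ ?_
    · have : {p : E → ℝ | ∀ i, 0 ≤ p i} = Set.Ici 0 := by ext p; simp [Pi.le_def]
      rw [this]; exact isClosed_Ici
    · exact isClosed_eq (by fun_prop) continuous_const
  · intro p hp
    exact ⟨fun i => hp.1 i, fun i => pv_le_one ⟨p, hp⟩ i⟩

lemma bddcont {f : ProbVec E → ℝ} (hf : Continuous f) : ∃ C : ℝ, ∀ μ, |f μ| ≤ C := by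
  obtain ⟨C, hC⟩ := isCompact_univ.exists_bound_of_continuousOn hf.continuousOn
  exact ⟨C, fun μ => hC μ (Set.mem_univ _)⟩

open Classical in
/-- normalisation with default -/
noncomputable def nrm (d : ProbVec E) (p : E → ℝ) : ProbVec E :=
  if h : (∀ i, 0 ≤ p i) ∧ 0 < ∑ i, p i then
    mkPV (fun i => p i / ∑ i, p i) (fun i => div_nonneg (h.1 i) h.2.le)
      (by rw [← Finset.sum_div, div_self h.2.ne'])
  else d

lemma nrm_apply (d : ProbVec E) {p : E → ℝ} (h0 : ∀ i, 0 ≤ p i) (h1 : 0 < ∑ i, p i) :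
    (nrm d p : E → ℝ) = fun i => p i / ∑ i, p i := by
  rw [nrm, dif_pos ⟨h0, h1⟩]; rfl

lemma nrm_pv (d μ : ProbVec E) : nrm d (μ : E → ℝ) = μ := by
  apply Subtype.ext
  rw [nrm_apply d μ.2.1 (by rw [pv_sum]; exact one_pos)]
  simp [pv_sum]

lemma nrm_meas (d : ProbVec E) : Measurable (nrm d) := by
  classical
  rw [← (MeasurableEmbedding.subtype_coe (s := {p : E → ℝ | (∀ i, 0 ≤ p i) ∧ HasSum p 1})
    (by
      have : IsCompact {p : E → ℝ | (∀ i, 0 ≤ p i) ∧ HasSum p 1} :=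
        isCompact_iff_compactSpace.2 pv_compact
      exact this.isClosed.measurableSet)).measurable_comp_iff]
  have : (fun p => ((nrm d p : ProbVec E) : E → ℝ)) = fun p =>
      if (∀ i, 0 ≤ p i) ∧ 0 < ∑ i, p i then (fun i => p i / ∑ i, p i) else (d : E → ℝ) := by
    funext p
    split_ifs with h
    · exact nrm_apply d h.1 h.2
    · rw [nrm, dif_neg h]
  show Measurable (fun p => ((nrm d p : ProbVec E) : E → ℝ))
  rw [this]
  have hs : Measurable fun p : E → ℝ => ∑ i, p i :=
    Finset.measurable_sum _ fun i _ => measurable_pi_apply i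
  refine Measurable.ite ?_ ?_ measurable_const
  · refine MeasurableSet.inter ?_ (measurableSet_lt measurable_const hs)
    have : {p : E → ℝ | ∀ i, 0 ≤ p i} = Set.Ici 0 := by ext p; simp [Pi.le_def]
    show MeasurableSet {p : E → ℝ | ∀ i, 0 ≤ p i}
    rw [this]; exact isClosed_Ici.measurableSet
  · exact measurable_pi_lambda _ fun i => (measurable_pi_apply i).div hs

lemma filterStep_spec (hMnn : ∀ y i j, 0 ≤ M y i j) (μ : ProbVec E) (y : F) (j : E) :
    (filterStep M μ y : E → ℝ) j * (∑ j, rowMul M (μ : E → ℝ) y j) = rowMul M (μ : E → ℝ) y j := by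
  have hnn := rowMul_nonneg hMnn μ.2.1 y
  have hex : ∃ ν : ProbVec E, ∀ j,
      (ν : E → ℝ) j * rowTot (rowMul M (μ : E → ℝ) y) = rowMul M (μ : E → ℝ) y j := by
    simp only [rowTot_eq]
    rcases (Finset.sum_nonneg fun j (_ : j ∈ Finset.univ) => hnn j).eq_or_lt with h | h
    · refine ⟨μ, fun j => ?_⟩
      have := (Finset.sum_eq_zero_iff_of_nonneg fun j (_ : j ∈ Finset.univ) => hnn j).1 h.symm j
        (Finset.mem_univ j)
      rw [← h, this, mul_zero]
    · refine ⟨nrm μ (rowMul M (μ : E → ℝ) y), fun j => ?_⟩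
      rw [nrm_apply μ hnn h]
      exact div_mul_cancel₀ _ h.ne'
  rw [← rowTot_eq]
  unfold filterStep
  rw [dif_pos hex]
  exact hex.choose_spec j

lemma filterStep_eq (hMnn : ∀ y i j, 0 ≤ M y i j) (d μ : ProbVec E) (y : F)
    (h : 0 < ∑ j, rowMul M (μ : E → ℝ) y j) :
    filterStep M μ y = nrm d (rowMul M (μ : E → ℝ) y) := by
  apply Subtype.ext
  rw [nrm_apply d (rowMul_nonneg hMnn μ.2.1 y) h]
  funext j
  rw [eq_div_iff h.ne']
  exact filterStep_spec hMnn μ y j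

lemma filterKernel_eq (hMnn : ∀ y i j, 0 ≤ M y i j) (d : ProbVec E) (f : ProbVec E → ℝ)
    (μ : ProbVec E) : filterKernel M φ f μ =
      ∫ y, f (nrm d (rowMul M (μ : E → ℝ) y)) * ∑ j, rowMul M (μ : E → ℝ) y j ∂φ := by
  unfold filterKernel
  refine integral_congr_ae (ae_of_all _ fun y => ?_)
  simp only [rowTot_eq]
  rcases (Finset.sum_nonneg fun j (_ : j ∈ Finset.univ) =>
    rowMul_nonneg hMnn μ.2.1 y j).eq_or_lt with h | h
  · rw [← h, mul_zero, mul_zero]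
  · rw [filterStep_eq hMnn d μ y h]

lemma rowMul_meas (hMmeas : ∀ i j, Measurable fun y => M y i j) (p : E → ℝ) :
    Measurable fun y => rowMul M p y :=
  (T1_meas hMmeas).comp (measurable_const.prodMk measurable_id)

lemma integrand_meas (hMmeas : ∀ i j, Measurable fun y => M y i j) (d : ProbVec E)
    {f : ProbVec E → ℝ} (hf : Continuous f) (p : E → ℝ) :
    Measurable fun y => f (nrm d (rowMul M p y)) * ∑ j, rowMul M p y j :=
  (hf.measurable.comp ((nrm_meas d).comp (rowMul_meas hMmeas p))).mul
    (Finset.measurable_sum _ fun j _ => (measurable_pi_apply j).comp (rowMul_meas hMmeas p))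

lemma integrand_integrable (hMmeas : ∀ i j, Measurable fun y => M y i j)
    (hint : ∀ i j, Integrable (fun y => M y i j) φ) (d : ProbVec E)
    {f : ProbVec E → ℝ} (hf : Continuous f) (p : E → ℝ) :
    Integrable (fun y => f (nrm d (rowMul M p y)) * ∑ j, rowMul M p y j) φ := by
  obtain ⟨C, hC⟩ := bddcont hf
  refine (tot_integrable hint p).bdd_mul (c := C) ?_ (ae_of_all _ fun y => hC _)
  exact (hf.measurable.comp ((nrm_meas d).comp (rowMul_meas hMmeas p))).aestronglyMeasurable

lemma feller (hMmeas : ∀ i j, Measurable fun y => M y i j)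
    (hMnn : ∀ y i j, 0 ≤ M y i j) (hint : ∀ i j, Integrable (fun y => M y i j) φ)
    (d : ProbVec E) {f : ProbVec E → ℝ} (hf : Continuous f) :
    Continuous (filterKernel M φ f) := by
  obtain ⟨C, hC⟩ := bddcont hf
  have hC0 : 0 ≤ C := (abs_nonneg _).trans (hC d)
  have hcr : ∀ y j, Continuous fun μ : ProbVec E => rowMul M (μ : E → ℝ) y j := fun y j => by
    simp only [rowMul_apply]
    exact continuous_finsetSum _ fun i _ =>
      ((continuous_apply i).comp continuous_subtype_val).mul continuous_const
  have hct : ∀ y, Continuous fun μ : ProbVec E => ∑ j, rowMul M (μ : E → ℝ) y j := fun y =>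
    continuous_finsetSum _ fun j _ => hcr y j
  rw [funext (filterKernel_eq hMnn d f)]
  refine continuous_of_dominated (bound := fun y => C * ∑ j, ∑ i, M y i j) ?_ ?_ ?_ ?_
  · exact fun μ => (integrand_meas hMmeas d hf _).aestronglyMeasurable
  · refine fun μ => ae_of_all _ fun y => ?_
    rw [norm_mul]
    have h0 : 0 ≤ ∑ j, rowMul M (μ : E → ℝ) y j :=
      Finset.sum_nonneg fun j _ => rowMul_nonneg hMnn μ.2.1 y j
    rw [Real.norm_of_nonneg h0]
    refine mul_le_mul (hC _) ?_ h0 hC0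
    refine Finset.sum_le_sum fun j _ => ?_
    rw [rowMul_apply]
    exact Finset.sum_le_sum fun i _ => mul_le_of_le_one_left (hMnn y i j) (pv_le_one μ i)
  · exact (integrable_finsetSum _ fun j _ => integrable_finsetSum _ fun i _ => hint i j).const_mul _
  · refine ae_of_all _ fun y => continuous_iff_continuousAt.2 fun μ₀ => ?_
    have hnn : ∀ μ : ProbVec E, 0 ≤ ∑ j, rowMul M (μ : E → ℝ) y j := fun μ =>
      Finset.sum_nonneg fun j _ => rowMul_nonneg hMnn μ.2.1 y j
    rcases (hnn μ₀).eq_or_lt with h | h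
    · rw [ContinuousAt, ← h, mul_zero]
      refine squeeze_zero_norm (a := fun μ : ProbVec E => C * ∑ j, rowMul M (μ : E → ℝ) y j)
        (fun μ => ?_) ?_
      · rw [norm_mul, Real.norm_of_nonneg (hnn μ)]
        exact mul_le_mul_of_nonneg_right (hC _) (hnn μ)
      · have := ((hct y).const_mul C).tendsto μ₀
        simpa [← h] using this
    · refine ContinuousAt.mul (hf.continuousAt.comp ?_) (hct y).continuousAt
      have hind : Topology.IsInducing (Subtype.val : ProbVec E → E → ℝ) := ⟨rfl⟩
      rw [hind.continuousAt_iff]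
      have hev : ∀ᶠ μ in 𝓝 μ₀, 0 < ∑ j, rowMul M ((μ : ProbVec E) : E → ℝ) y j :=
        (hct y).continuousAt.eventually (lt_mem_nhds h)
      have hc : ContinuousAt (fun μ : ProbVec E => fun i => rowMul M (μ : E → ℝ) y i /
          ∑ j, rowMul M (μ : E → ℝ) y j) μ₀ :=
        continuousAt_pi.2 fun i => (hcr y i).continuousAt.div (hct y).continuousAt h.ne'
      refine hc.congr ?_
      filter_upwards [hev] with μ hμ
      exact (nrm_apply d (rowMul_nonneg hMnn μ.2.1 y) hμ).symm

/-- homogeneous extension -/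
noncomputable def hat (d : ProbVec E) (f : ProbVec E → ℝ) (p : E → ℝ) : ℝ≥0∞ :=
  mass p * ENNReal.ofReal (f (nrm d p))

lemma filterKernel_nonneg (hMnn : ∀ y i j, 0 ≤ M y i j)
    {f : ProbVec E → ℝ} (hf : ∀ μ, 0 ≤ f μ) (μ : ProbVec E) : 0 ≤ filterKernel M φ f μ := by
  rw [filterKernel_eq hMnn μ]
  exact integral_nonneg fun y => mul_nonneg (hf _)
    (Finset.sum_nonneg fun j _ => rowMul_nonneg hMnn μ.2.1 y j)

lemma S_hat (hMmeas : ∀ i j, Measurable fun y => M y i j)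
    (hMnn : ∀ y i j, 0 ≤ M y i j) (hint : ∀ i j, Integrable (fun y => M y i j) φ)
    (d : ProbVec E) {f : ProbVec E → ℝ} (hf : Continuous f) (hf0 : ∀ μ, 0 ≤ f μ)
    {p : E → ℝ} (hp : ∀ i, 0 ≤ p i) :
    Sop φ (T1 M) (hat d f) p = hat d (filterKernel M φ f) p := by
  rcases (Finset.sum_nonneg fun j (_ : j ∈ Finset.univ) => hp j).eq_or_lt with h | h
  · have hp0 : ∀ i, p i = 0 := fun i =>
      (Finset.sum_eq_zero_iff_of_nonneg fun j (_ : j ∈ Finset.univ) => hp j).1 h.symm i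
        (Finset.mem_univ i)
    simp [Sop, hat, mass, T1, rowMul_apply, hp0]
  · set s := ∑ i, p i with hs
    set μ := nrm d p with hμ
    have hpm : ∀ y, rowMul M p y = fun j => s * rowMul M (μ : E → ℝ) y j := fun y => by
      funext j
      rw [hμ, nrm_apply d hp h]
      simp only [rowMul_apply, Finset.mul_sum]
      refine Finset.sum_congr rfl fun i _ => ?_
      rw [← hs]; field_simp
    have hn : ∀ y, ENNReal.ofReal s * ENNReal.ofReal (f (nrm d (rowMul M (μ : E → ℝ) y)) *
        ∑ j, rowMul M (μ : E → ℝ) y j) = hat d f (T1 M y p) := fun y => by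
      have hr0 := rowMul_nonneg hMnn μ.2.1 y
      have hr : 0 ≤ ∑ j, rowMul M (μ : E → ℝ) y j := Finset.sum_nonneg fun j _ => hr0 j
      rw [hat, mass, T1, hpm, ← Finset.mul_sum, ENNReal.ofReal_mul h.le, mul_assoc]
      congr 1
      rw [mul_comm (f _), ENNReal.ofReal_mul hr]
      rcases hr.eq_or_lt with h0 | h0
      · simp [← h0]
      · congr 3
        apply Subtype.ext
        rw [nrm_apply d hr0 h0, nrm_apply d (fun i => mul_nonneg h.le (hr0 i))
          (by rw [← Finset.mul_sum]; positivity)]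
        funext i
        rw [← Finset.mul_sum, mul_div_mul_left _ _ h.ne']
    rw [Sop, hat, mass, ← hs, filterKernel_eq hMnn d,
      ofReal_integral_eq_lintegral_ofReal (integrand_integrable hMmeas hint d hf _)
        (ae_of_all _ fun y => mul_nonneg (hf0 _)
          (Finset.sum_nonneg fun j _ => rowMul_nonneg hMnn (nrm d p).2.1 y j)),
      ← lintegral_const_mul _ (integrand_meas hMmeas d hf _).ennreal_ofReal]
    exact lintegral_congr fun y => (hn y).symm

lemma fk_iter (hMmeas : ∀ i j, Measurable fun y => M y i j)
    (hMnn : ∀ y i j, 0 ≤ M y i j) (hint : ∀ i j, Integrable (fun y => M y i j) φ)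
    (d : ProbVec E) {f : ProbVec E → ℝ} (hf : Continuous f) (hf0 : ∀ μ, 0 ≤ f μ) (n : ℕ) :
    Continuous ((filterKernel M φ)^[n] f) ∧ ∀ μ, 0 ≤ (filterKernel M φ)^[n] f μ := by
  induction n with
  | zero => exact ⟨hf, hf0⟩
  | succ n ih =>
    rw [Function.iterate_succ_apply']
    exact ⟨feller hMmeas hMnn hint d ih.1, filterKernel_nonneg hMnn ih.2⟩

lemma Sit_hat (hMmeas : ∀ i j, Measurable fun y => M y i j)
    (hMnn : ∀ y i j, 0 ≤ M y i j) (hint : ∀ i j, Integrable (fun y => M y i j) φ)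
    (d : ProbVec E) {f : ProbVec E → ℝ} (hf : Continuous f) (hf0 : ∀ μ, 0 ≤ f μ) (n : ℕ)
    {p : E → ℝ} (hp : ∀ i, 0 ≤ p i) :
    (Sop φ (T1 M))^[n] (hat d f) p = hat d ((filterKernel M φ)^[n] f) p := by
  induction n generalizing p with
  | zero => rfl
  | succ n ih =>
    have h := fk_iter hMmeas hMnn hint d hf hf0 n
    rw [Function.iterate_succ_apply', Function.iterate_succ_apply',
      ← S_hat hMmeas hMnn hint d h.1 h.2 hp]
    exact lintegral_congr fun y => ih (rowMul_nonneg hMnn hp y)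

lemma hat_meas (d : ProbVec E) {f : ProbVec E → ℝ} (hf : Continuous f) : Measurable (hat d f) :=
  mass_meas.mul (ENNReal.measurable_ofReal.comp (hf.measurable.comp (nrm_meas d)))

lemma hat_pv (d : ProbVec E) (f : ProbVec E → ℝ) (μ : ProbVec E) :
    hat d f (μ : E → ℝ) = ENNReal.ofReal (f μ) := by
  rw [hat, mass, pv_sum, nrm_pv]; simp

end Filt
set_option linter.unusedSectionVars false

section Conv
variable {E F : Type*} [Fintype E] [MeasurableSpace F]
  {φ : Measure F} [SigmaFinite φ] {M : F → E → E → ℝ}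

/-- discrepancy -/
noncomputable def hh (d : ProbVec E) (f : ProbVec E → ℝ) (x : (E → ℝ) × (E → ℝ)) : ℝ≥0∞ :=
  mass x.1 * ENNReal.ofReal |f (nrm d x.1) - f (nrm d x.2)|

/-- decoupled functional -/
noncomputable def kk (d : ProbVec E) (f : ProbVec E → ℝ) (x : (E → ℝ) × (E → ℝ)) : ℝ≥0∞ :=
  mass x.1 * ENNReal.ofReal (f (nrm d x.2))

lemma hh_meas (d : ProbVec E) {f : ProbVec E → ℝ} (hf : Continuous f) : Measurable (hh d f) := by
  have h := hf.measurable.comp (nrm_meas d)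
  refine (mass_meas.comp measurable_fst).mul (ENNReal.measurable_ofReal.comp ?_)
  exact ((h.comp measurable_fst).sub (h.comp measurable_snd)).abs

lemma kk_meas (d : ProbVec E) {f : ProbVec E → ℝ} (hf : Continuous f) : Measurable (kk d f) := by
  have h := hf.measurable.comp (nrm_meas d)
  exact (mass_meas.comp measurable_fst).mul
    (ENNReal.measurable_ofReal.comp (h.comp measurable_snd))

lemma uc_bound {f : ProbVec E → ℝ} (hf : Continuous f) {η : ℝ} (hη : 0 < η) :
    ∃ L : ℝ, 0 < L ∧ ∀ a b : ProbVec E, |f a - f b| ≤ η + L * ‖(a : E → ℝ) - b‖ := by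
  obtain ⟨C, hC⟩ := bddcont hf
  obtain ⟨δ, hδ, h⟩ := Metric.uniformContinuous_iff.1
    (CompactSpace.uniformContinuous_of_continuous hf) η hη
  refine ⟨(2 * |C| + 1) / δ, by positivity, fun a b => ?_⟩
  have hd : dist a b = ‖(a : E → ℝ) - b‖ := by rw [← dist_eq_norm]; rfl
  rw [← hd]
  rcases lt_or_ge (dist a b) δ with h1 | h1
  · have h2 := h h1
    rw [Real.dist_eq] at h2
    have : 0 ≤ (2 * |C| + 1) / δ * dist a b := by positivity
    linarith
  · have h2 : |f a - f b| ≤ |f a| + |f b| := abs_sub _ _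
    have h3 : (2 * |C| + 1) / δ * δ ≤ (2 * |C| + 1) / δ * dist a b := by gcongr
    rw [div_mul_cancel₀ _ hδ.ne'] at h3
    linarith [hC a, hC b, le_abs_self C]

lemma hh_bound (d : ProbVec E) {f : ProbVec E → ℝ} {η L c : ℝ} (hη : 0 < η) (hL : 0 < L)
    (hc : 0 < c) (hfL : ∀ a b : ProbVec E, |f a - f b| ≤ η + L * ‖(a : E → ℝ) - b‖)
    {N : ℕ} (hN : ∀ v : E → ℝ, ENNReal.ofReal (c * ‖v‖) ≤ rho φ M N v)
    {K : ℝ} {x : (E → ℝ) × (E → ℝ)} (hx : DD K x) :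
    hh d f x ≤ ENNReal.ofReal η * mass x.1 + ENNReal.ofReal (L / c) *
      rho φ M N (fun i => 1 * x.1 i + (-((∑ i, x.1 i) / ∑ i, x.2 i)) * x.2 i) := by
  obtain ⟨h1, h2, h3⟩ := DD_sum hx
  rcases h1.eq_or_lt with h | h
  · have : hh d f x = 0 := by simp [hh, mass, ← h]
    rw [this]; exact zero_le
  have hb : 0 < ∑ i, x.2 i := by
    rcases h2.eq_or_lt with h' | h'
    · rw [← h', mul_zero] at h3; linarith
    · exact h'
  refine le_trans ?_ (add_le_add_right (mul_le_mul_right (hN _) _) _)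
  rw [← ENNReal.ofReal_mul (by positivity), hh, mass, ← ENNReal.ofReal_mul h1,
    ← ENNReal.ofReal_mul hη.le, ← ENNReal.ofReal_add (by positivity) (by positivity)]
  apply ENNReal.ofReal_le_ofReal
  have hv : (fun i => 1 * x.1 i + (-((∑ i, x.1 i) / ∑ i, x.2 i)) * x.2 i) =
      (∑ i, x.1 i) • ((nrm d x.1 : E → ℝ) - (nrm d x.2 : E → ℝ)) := by
    rw [nrm_apply d hx.1 h, nrm_apply d hx.2.1 hb]
    funext i
    simp only [Pi.smul_apply, Pi.sub_apply, smul_eq_mul]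
    field_simp
    ring
  rw [hv, norm_smul, Real.norm_of_nonneg h1]
  calc (∑ i, x.1 i) * |f (nrm d x.1) - f (nrm d x.2)|
      ≤ (∑ i, x.1 i) * (η + L * ‖(nrm d x.1 : E → ℝ) - (nrm d x.2 : E → ℝ)‖) := by
        gcongr; exact hfL _ _
    _ = _ := by field_simp

lemma VV_le {K : ℝ} (hK : 0 ≤ K) {x : (E → ℝ) × (E → ℝ)} (hx : DD K x) :
    VV x ≤ ENNReal.ofReal K * mass x.1 := by
  obtain ⟨h1, h2, h3⟩ := DD_sum hx
  rw [VV, mass, ← ENNReal.ofReal_mul hK]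
  apply ENNReal.ofReal_le_ofReal
  rcases h2.eq_or_lt with h' | h'
  · rw [← h', _root_.div_zero]; positivity
  · rw [div_le_iff₀ h']; nlinarith

lemma conv_zero (hMmeas : ∀ i j, Measurable fun y => M y i j)
    (hMnn : ∀ y i j, 0 ≤ M y i j) (hint : ∀ i j, Integrable (fun y => M y i j) φ)
    (hP : ∀ i, ∑ j, transMat M φ i j = 1)
    {N : ℕ} {c : ℝ} (hc : 0 < c) (hN : ∀ v : E → ℝ, ENNReal.ofReal (c * ‖v‖) ≤ rho φ M N v)
    (d : ProbVec E) {f : ProbVec E → ℝ} (hf : Continuous f)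
    (lam : ProbVec E) {K : ℝ} (hK : 0 ≤ K) (μ : ProbVec E)
    (hx : DD K ((μ : E → ℝ), (lam : E → ℝ))) :
    Tendsto (fun n => (Sop φ (T2 M))^[n] (hh d f) ((μ : E → ℝ), (lam : E → ℝ))) atTop (𝓝 0) := by
  have hT := T2_meas hMmeas
  set x : (E → ℝ) × (E → ℝ) := ((μ : E → ℝ), (lam : E → ℝ)) with hxdef
  have mx1 : mass x.1 = 1 := by simp [mass, hxdef, pv_sum]
  have mx2 : mass x.2 = 1 := by simp [mass, hxdef, pv_sum]
  have m1 : Measurable fun x : (E → ℝ) × (E → ℝ) => mass x.1 := mass_meas.comp measurable_fst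
  have m2 : Measurable fun x : (E → ℝ) × (E → ℝ) => mass x.2 := mass_meas.comp measurable_snd
  set v : ℕ → ℝ≥0∞ := fun n => (Sop φ (T2 M))^[n] VV x with hv
  have hvmono : Monotone v := by
    refine monotone_nat_of_le_succ fun n => ?_
    simp only [hv]
    rw [Function.iterate_succ_apply]
    refine Sit_mono_on (D := DD K) (DD_T2 hMnn) (fun z hz => ?_) n x hx
    have := Sit_V (φ := φ) hMmeas hMnn hint hP hz 1
    rw [Function.iterate_one] at this
    rw [this]; exact le_add_self
  have hvb : ∀ n, v n ≤ ENNReal.ofReal K := fun n => by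
    have := Sit_mono_on (φ := φ) (D := DD K) (DD_T2 hMnn)
      (h := VV) (g := fun x => ENNReal.ofReal K * mass x.1) (fun z hz => VV_le hK hz) n x hx
    rwa [Sit_const_mul hT m1, Sit_mass1 hMnn hint hP hx.1, mx1, mul_one] at this
  rw [ENNReal.tendsto_nhds_zero]
  intro ε hε
  obtain ⟨r, hr0, hr⟩ := ENNReal.lt_iff_exists_nnreal_btwn.1 hε
  have hr0' : (0 : ℝ) < r := by simpa using hr0
  set η : ℝ := r / 3 with hη
  have hη0 : 0 < η := by positivity
  obtain ⟨L, hL, hfL⟩ := uc_bound hf hη0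
  set δ : ℝ := η * c / L with hδ
  have hδ0 : 0 < δ := by positivity
  set A : ℝ≥0∞ := ENNReal.ofReal (L / c) * ENNReal.ofReal (1 / (4 * δ)) with hA
  have hAtop : A ≠ ⊤ := by finiteness
  have hpt : ∀ z, DD K z → hh d f z + A * VV z ≤
      (ENNReal.ofReal η * mass z.1 + ENNReal.ofReal η * mass z.2) +
        A * (Sop φ (T2 M))^[N] VV z := fun z hz => by
    have b1 := hh_bound (φ := φ) (M := M) d hη0 hL hc hfL hN hz
    have b2 := rho_le_D (φ := φ) hMmeas hMnn hint hP hz N ((∑ i, z.1 i) / ∑ i, z.2 i) δ hδ0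
    have b3 := Sit_V (φ := φ) hMmeas hMnn hint hP hz N
    rw [b3, mul_add, ← add_assoc]
    refine add_le_add_left ?_ _
    refine b1.trans ?_
    rw [add_assoc]
    refine add_le_add_right ?_ _
    refine (mul_le_mul_right b2 _).trans ?_
    rw [mul_add, ← mul_assoc, ← mul_assoc, ← ENNReal.ofReal_mul (by positivity)]
    have : L / c * δ = η := by rw [hδ]; field_simp
    rw [this]
  have hstep : ∀ n, (Sop φ (T2 M))^[n] (hh d f) x + A * v n ≤
      (ENNReal.ofReal η + ENNReal.ofReal η) + A * v (n + N) := fun n => by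
    have h := Sit_mono_on (φ := φ) (D := DD K) (DD_T2 hMnn) hpt n x hx
    have m12 : Measurable fun x : (E → ℝ) × (E → ℝ) =>
        ENNReal.ofReal η * mass x.1 + ENNReal.ofReal η * mass x.2 :=
      (m1.const_mul _).add (m2.const_mul _)
    rw [Sit_add hT (hh_meas d hf), Sit_const_mul hT VV_meas,
      Sit_add hT m12, Sit_add hT (m1.const_mul _),
      Sit_const_mul hT m1, Sit_const_mul hT m2, Sit_const_mul hT (Sit_meas hT VV_meas N),
      Sit_mass1 hMnn hint hP hx.1, Sit_mass2 hMnn hint hP hx.2.1, mx1, mx2, mul_one,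
      ← Function.iterate_add_apply] at h
    exact h
  set U := A * ⨆ n, v n with hU
  have hsup : ⨆ n, v n ≠ ⊤ := ((iSup_le hvb).trans_lt ENNReal.ofReal_lt_top).ne
  have hUtop : U ≠ ⊤ := ENNReal.mul_ne_top hAtop hsup
  have hlim : Tendsto (fun n => A * v n + ENNReal.ofReal η) atTop (𝓝 (U + ENNReal.ofReal η)) :=
    (ENNReal.Tendsto.const_mul (tendsto_atTop_iSup hvmono) (Or.inr hAtop)).add tendsto_const_nhds
  have hlt : U < U + ENNReal.ofReal η :=
    ENNReal.lt_add_right hUtop (by simpa using hη0)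
  filter_upwards [hlim.eventually (lt_mem_nhds hlt)] with n hn
  have h1 : A * v (n + N) ≤ A * v n + ENNReal.ofReal η :=
    le_trans (mul_le_mul_right (le_iSup v _) _) hn.le
  have h2 := (hstep n).trans (add_le_add_right h1 _)
  have hfin : A * v n ≠ ⊤ := ENNReal.mul_ne_top hAtop ((hvb n).trans_lt ENNReal.ofReal_lt_top).ne
  have h3 : (Sop φ (T2 M))^[n] (hh d f) x + A * v n ≤
      (ENNReal.ofReal η + ENNReal.ofReal η + ENNReal.ofReal η) + A * v n := by
    refine h2.trans (le_of_eq ?_); ring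
  have h4 := (ENNReal.add_le_add_iff_right hfin).1 h3
  refine h4.trans (le_trans (le_of_eq ?_) hr.le)
  rw [← ENNReal.ofReal_add hη0.le hη0.le, ← ENNReal.ofReal_add (by positivity) hη0.le,
    ← ENNReal.ofReal_coe_nnreal]
  congr 1; rw [hη]; ring

lemma lin_S2 [DecidableEq E] (hMmeas : ∀ i j, Measurable fun y => M y i j)
    (hMnn : ∀ y i j, 0 ≤ M y i j) {h : (E → ℝ) × (E → ℝ) → ℝ≥0∞} (hm : Measurable h)
    (hl : ∀ p q, (∀ i, 0 ≤ p i) → h (p, q) = ∑ i, ENNReal.ofReal (p i) * h (Pi.single i 1, q))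
    (n : ℕ) (p q : E → ℝ) (hp : ∀ i, 0 ≤ p i) :
    (Sop φ (T2 M))^[n] h (p, q) =
      ∑ i, ENNReal.ofReal (p i) * (Sop φ (T2 M))^[n] h (Pi.single i 1, q) := by
  have hT := T2_meas hMmeas
  induction n generalizing p q with
  | zero => exact hl p q hp
  | succ n ih =>
    rw [Function.iterate_succ_apply']
    set g := (Sop φ (T2 M))^[n] h with hg
    have gm : Measurable g := Sit_meas hT hm n
    have gy : ∀ z, Measurable fun y => g (T2 M y z) := fun z =>
      gm.comp (hT.comp measurable_prodMk_left)
    unfold Sop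
    rw [show (∑ i, ENNReal.ofReal (p i) * ∫⁻ y, g (T2 M y (Pi.single i 1, q)) ∂φ) =
      ∫⁻ y, ∑ i, ENNReal.ofReal (p i) * g (T2 M y (Pi.single i 1, q)) ∂φ by
        rw [lintegral_finsetSum _ fun i _ => (gy _).const_mul _]
        exact Finset.sum_congr rfl fun i _ => (lintegral_const_mul _ (gy _)).symm]
    refine lintegral_congr fun y => ?_
    have hs : ∀ i, (0 : E → ℝ) ≤ Pi.single i 1 := fun i => by
      rw [Pi.single_nonneg]; exact zero_le_one
    have hsi : ∀ i j, rowMul M (Pi.single i 1) y j = M y i j := fun i j => by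
      rw [rowMul_apply, Finset.sum_eq_single i]
      · simp
      · intro b _ hb; simp [Pi.single_eq_of_ne hb]
      · simp
    have e1 := ih (rowMul M p y) (rowMul M q y) (rowMul_nonneg hMnn hp y)
    have e2 := fun i => ih (rowMul M (Pi.single i 1) y) (rowMul M q y)
      (rowMul_nonneg hMnn (hs i) y)
    simp only [T2]
    rw [e1]
    simp only [e2, hsi, Finset.mul_sum]
    rw [Finset.sum_comm]
    refine Finset.sum_congr rfl fun j _ => ?_
    rw [rowMul_apply, ENNReal.ofReal_sum_of_nonneg fun i _ => mul_nonneg (hp i) (hMnn y i j),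
      Finset.sum_mul]
    refine Finset.sum_congr rfl fun i _ => ?_
    rw [ENNReal.ofReal_mul (hp i), mul_assoc]

lemma kk_lin [DecidableEq E] (d : ProbVec E) (f : ProbVec E → ℝ) (p q : E → ℝ)
    (hp : ∀ i, 0 ≤ p i) :
    kk d f (p, q) = ∑ i, ENNReal.ofReal (p i) * kk d f (Pi.single i 1, q) := by
  have : ∀ i : E, mass (Pi.single i 1 : E → ℝ) = 1 := fun i => by simp [mass]
  simp only [kk, this, one_mul]
  rw [mass, ENNReal.ofReal_sum_of_nonneg fun i _ => hp i, Finset.sum_mul]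

lemma pv_integrable (𝕄 : ProbabilityMeasure (ProbVec E)) {f : ProbVec E → ℝ} (hf : Continuous f) :
    Integrable f (𝕄 : Measure (ProbVec E)) := by
  obtain ⟨C, hC⟩ := bddcont hf
  exact Integrable.of_bound hf.measurable.aestronglyMeasurable C (ae_of_all _ hC)

lemma coord_cont (j : E) : Continuous fun μ : ProbVec E => (μ : E → ℝ) j :=
  (continuous_apply j).comp continuous_subtype_val

lemma bary (hMnn : ∀ y i j, 0 ≤ M y i j) (hint : ∀ i j, Integrable (fun y => M y i j) φ)
    (lam : ProbVec E)
    (hlamUniq : ∀ ρ : ProbVec E,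
      (∀ j, ∑' i, (ρ : E → ℝ) i * transMat M φ i j = (ρ : E → ℝ) j) → ρ = lam)
    (𝕄 : ProbabilityMeasure (ProbVec E)) (h𝕄 : IsPiInvariant M φ 𝕄) (j : E) :
    ∫ μ, (μ : E → ℝ) j ∂(𝕄 : Measure (ProbVec E)) = (lam : E → ℝ) j := by
  set b : E → ℝ := fun j => ∫ μ, (μ : E → ℝ) j ∂(𝕄 : Measure (ProbVec E)) with hb
  have h0 : ∀ i, 0 ≤ b i := fun i => integral_nonneg fun μ => μ.2.1 i
  have h1 : ∑ i, b i = 1 := by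
    rw [hb, ← integral_finsetSum _ fun i _ => pv_integrable 𝕄 (coord_cont i)]
    simp [pv_sum]
  have h2 := hlamUniq (mkPV b h0 h1) (fun j => by
    rw [tsum_fintype]
    have := h𝕄 _ ⟨coord_cont j, bddcont (coord_cont j)⟩
    have hk : ∀ μ : ProbVec E, filterKernel M φ (fun μ : ProbVec E => (μ : E → ℝ) j) μ =
        ∑ i, (μ : E → ℝ) i * transMat M φ i j := fun μ => by
      unfold filterKernel
      simp only [rowTot_eq, filterStep_spec hMnn]
      exact rowMul_integral hint _ j
    simp only [hk] at this
    rw [integral_finsetSum _ fun i _ => (pv_integrable 𝕄 (coord_cont i)).mul_const _] at this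
    simp only [integral_mul_const] at this
    exact this)
  have h3 := congrArg (fun ρ : ProbVec E => (ρ : E → ℝ) j) h2
  exact h3

lemma inv_iter (hMmeas : ∀ i j, Measurable fun y => M y i j)
    (hMnn : ∀ y i j, 0 ≤ M y i j) (hint : ∀ i j, Integrable (fun y => M y i j) φ)
    (d : ProbVec E) {f : ProbVec E → ℝ} (hf : Continuous f) (hf0 : ∀ μ, 0 ≤ f μ)
    (𝕄 : ProbabilityMeasure (ProbVec E)) (h𝕄 : IsPiInvariant M φ 𝕄) (n : ℕ) :
    ∫⁻ μ, ENNReal.ofReal ((filterKernel M φ)^[n] f μ) ∂(𝕄 : Measure (ProbVec E)) =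
      ∫⁻ μ, ENNReal.ofReal (f μ) ∂(𝕄 : Measure (ProbVec E)) := by
  have hc := fk_iter hMmeas hMnn hint d hf hf0
  rw [← ofReal_integral_eq_lintegral_ofReal (pv_integrable 𝕄 (hc n).1) (ae_of_all _ (hc n).2),
    ← ofReal_integral_eq_lintegral_ofReal (pv_integrable 𝕄 hf) (ae_of_all _ hf0)]
  congr 1
  induction n with
  | zero => rfl
  | succ n ih =>
    rw [Function.iterate_succ_apply', ← ih]
    exact h𝕄 _ ⟨(hc n).1, bddcont (hc n).1⟩

lemma compare [DecidableEq E] (hMmeas : ∀ i j, Measurable fun y => M y i j)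
    (hMnn : ∀ y i j, 0 ≤ M y i j) (hint : ∀ i j, Integrable (fun y => M y i j) φ)
    (hP : ∀ i, ∑ j, transMat M φ i j = 1)
    {N : ℕ} {c : ℝ} (hc : 0 < c) (hN : ∀ v : E → ℝ, ENNReal.ofReal (c * ‖v‖) ≤ rho φ M N v)
    {f : ProbVec E → ℝ} (hf : Continuous f) (hf0 : ∀ μ, 0 ≤ f μ)
    (lam : ProbVec E) {K : ℝ} (hK : 0 ≤ K)
    (hx : ∀ μ : ProbVec E, DD K ((μ : E → ℝ), (lam : E → ℝ)))
    (hlamUniq : ∀ ρ : ProbVec E,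
      (∀ j, ∑' i, (ρ : E → ℝ) i * transMat M φ i j = (ρ : E → ℝ) j) → ρ = lam)
    (𝕄 : ProbabilityMeasure (ProbVec E)) (h𝕄 : IsPiInvariant M φ 𝕄) :
    ∃ e : ℕ → ℝ≥0∞, Tendsto e atTop (𝓝 0) ∧ ∀ n,
      ∫⁻ μ, ENNReal.ofReal (f μ) ∂(𝕄 : Measure (ProbVec E)) ≤
        (∑ i, ENNReal.ofReal ((lam : E → ℝ) i) *
          (Sop φ (T2 M))^[n] (kk lam f) (Pi.single i 1, (lam : E → ℝ))) + e n ∧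
      (∑ i, ENNReal.ofReal ((lam : E → ℝ) i) *
          (Sop φ (T2 M))^[n] (kk lam f) (Pi.single i 1, (lam : E → ℝ))) ≤
        ∫⁻ μ, ENNReal.ofReal (f μ) ∂(𝕄 : Measure (ProbVec E)) + e n := by
  have hT := T2_meas hMmeas
  have emb : Measurable fun μ : ProbVec E => ((μ : E → ℝ), (lam : E → ℝ)) :=
    measurable_subtype_coe.prodMk measurable_const
  have m1 : Measurable fun x : (E → ℝ) × (E → ℝ) => mass x.1 := mass_meas.comp measurable_fst
  have hm : ∀ n, Measurable fun μ : ProbVec E =>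
      (Sop φ (T2 M))^[n] (hh lam f) ((μ : E → ℝ), (lam : E → ℝ)) := fun n => (Sit_meas (φ := φ) hT (hh_meas lam hf) n).comp emb
  have km : ∀ n, Measurable fun μ : ProbVec E =>
      (Sop φ (T2 M))^[n] (kk lam f) ((μ : E → ℝ), (lam : E → ℝ)) := fun n => (Sit_meas (φ := φ) hT (kk_meas lam hf) n).comp emb
  have hatm : Measurable fun x : (E → ℝ) × (E → ℝ) => hat lam f x.1 :=
    (hat_meas lam hf).comp measurable_fst
  have hatm' : ∀ n, Measurable fun μ : ProbVec E =>
      (Sop φ (T2 M))^[n] (fun x => hat lam f x.1) ((μ : E → ℝ), (lam : E → ℝ)) := fun n =>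
    (Sit_meas (φ := φ) hT hatm n).comp emb
  have hkint : ∀ n, ∫⁻ μ, (Sop φ (T2 M))^[n] (kk lam f) ((μ : E → ℝ), (lam : E → ℝ))
      ∂(𝕄 : Measure (ProbVec E)) = ∑ i, ENNReal.ofReal ((lam : E → ℝ) i) *
          (Sop φ (T2 M))^[n] (kk lam f) (Pi.single i 1, (lam : E → ℝ)) := fun n => by
    have cm : ∀ i : E, Measurable fun μ : ProbVec E => ENNReal.ofReal ((μ : E → ℝ) i) := fun i =>
      (coord_cont i).measurable.ennreal_ofReal
    rw [lintegral_congr fun μ : ProbVec E => lin_S2 (φ := φ) hMmeas hMnn (kk_meas lam hf)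
      (kk_lin lam f) n (μ : E → ℝ) (lam : E → ℝ) μ.2.1,
      lintegral_finsetSum _ fun i _ => (cm i).mul_const _]
    refine Finset.sum_congr rfl fun i _ => ?_
    rw [lintegral_mul_const _ (cm i), ← bary hMnn hint lam hlamUniq 𝕄 h𝕄 i,
      ofReal_integral_eq_lintegral_ofReal (pv_integrable 𝕄 (coord_cont i))
        (ae_of_all _ fun μ => μ.2.1 i)]
  have hhat : ∀ n (μ : ProbVec E), ENNReal.ofReal ((filterKernel M φ)^[n] f μ) =
      (Sop φ (T2 M))^[n] (fun x => hat lam f x.1) ((μ : E → ℝ), (lam : E → ℝ)) := fun n μ => by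
    rw [Sit_comap (T := T1 M) (fun x : (E → ℝ) × (E → ℝ) => x.1) (fun y x => rfl),
      Sit_hat hMmeas hMnn hint lam hf hf0 n μ.2.1, hat_pv]
  refine ⟨fun n => ∫⁻ μ, (Sop φ (T2 M))^[n] (hh lam f) ((μ : E → ℝ), (lam : E → ℝ))
    ∂(𝕄 : Measure (ProbVec E)), ?_, fun n => ⟨?_, ?_⟩⟩
  · obtain ⟨C, hC⟩ := bddcont hf
    have hb : ∀ n (μ : ProbVec E), (Sop φ (T2 M))^[n] (hh lam f) ((μ : E → ℝ), (lam : E → ℝ)) ≤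
        ENNReal.ofReal (C + C) := fun n μ => by
      have := Sit_mono_on (φ := φ) (T := T2 M) (D := fun _ => True) (fun _ _ _ => trivial)
        (h := hh lam f) (g := fun x => ENNReal.ofReal (C + C) * mass x.1) (fun z _ => by
          rw [hh, mul_comm]
          refine mul_le_mul_left (ENNReal.ofReal_le_ofReal ?_) _
          exact (abs_sub _ _).trans (add_le_add (hC _) (hC _))) n
        ((μ : E → ℝ), (lam : E → ℝ)) trivial
      rw [Sit_const_mul hT m1, Sit_mass1 hMnn hint hP μ.2.1] at this
      simpa [mass, pv_sum] using this
    have := tendsto_lintegral_of_dominated_convergence (μ := (𝕄 : Measure (ProbVec E)))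
      (f := fun _ => 0) (fun _ => ENNReal.ofReal (C + C)) (fun n => hm n)
      (fun n => ae_of_all _ (hb n)) (by simp)
      (ae_of_all _ fun μ => conv_zero hMmeas hMnn hint hP hc hN lam hf lam hK μ (hx μ))
    simpa using this
  · beta_reduce
    rw [← hkint, ← inv_iter hMmeas hMnn hint lam hf hf0 𝕄 h𝕄 n, ← lintegral_add_left (km n)]
    refine lintegral_mono fun μ => ?_
    rw [hhat]
    show _ ≤ (Sop φ (T2 M))^[n] (kk lam f) _ + (Sop φ (T2 M))^[n] (hh lam f) _
    rw [← Sit_add hT (kk_meas lam hf)]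
    refine Sit_mono_on (D := fun _ => True) (fun _ _ _ => trivial) (fun z _ => ?_) n _ trivial
    rw [hat, kk, hh, ← mul_add]
    refine mul_le_mul_right ?_ _
    rw [← ENNReal.ofReal_add (hf0 _) (abs_nonneg _)]
    apply ENNReal.ofReal_le_ofReal
    linarith [le_abs_self (f (nrm lam z.1) - f (nrm lam z.2))]
  · beta_reduce
    rw [← hkint, ← inv_iter hMmeas hMnn hint lam hf hf0 𝕄 h𝕄 n]
    rw [lintegral_congr (hhat n), ← lintegral_add_left (hatm' n)]
    refine lintegral_mono fun μ => ?_
    show _ ≤ (Sop φ (T2 M))^[n] (fun x => hat lam f x.1) _ + (Sop φ (T2 M))^[n] (hh lam f) _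
    rw [← Sit_add hT hatm]
    refine Sit_mono_on (D := fun _ => True) (fun _ _ _ => trivial) (fun z _ => ?_) n _ trivial
    rw [hat, kk, hh, ← mul_add]
    refine mul_le_mul_right ?_ _
    rw [← ENNReal.ofReal_add (hf0 _) (abs_nonneg _)]
    apply ENNReal.ofReal_le_ofReal
    linarith [neg_abs_le (f (nrm lam z.1) - f (nrm lam z.2))]

lemma piInv_unique [DecidableEq E] (hMmeas : ∀ i j, Measurable fun y => M y i j)
    (hMnn : ∀ y i j, 0 ≤ M y i j) (hint : ∀ i j, Integrable (fun y => M y i j) φ)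
    (hP : ∀ i, ∑ j, transMat M φ i j = 1)
    {N : ℕ} {c : ℝ} (hc : 0 < c) (hN : ∀ v : E → ℝ, ENNReal.ofReal (c * ‖v‖) ≤ rho φ M N v)
    (lam : ProbVec E) {K : ℝ} (hK : 0 ≤ K)
    (hx : ∀ μ : ProbVec E, DD K ((μ : E → ℝ), (lam : E → ℝ)))
    (hlamUniq : ∀ ρ : ProbVec E,
      (∀ j, ∑' i, (ρ : E → ℝ) i * transMat M φ i j = (ρ : E → ℝ) j) → ρ = lam)
    (𝕄 𝕄' : ProbabilityMeasure (ProbVec E)) (h𝕄 : IsPiInvariant M φ 𝕄)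
    (h𝕄' : IsPiInvariant M φ 𝕄') : 𝕄 = 𝕄' := by
  have key : ∀ 𝕄 𝕄' : ProbabilityMeasure (ProbVec E), IsPiInvariant M φ 𝕄 →
      IsPiInvariant M φ 𝕄' → ∀ f : ProbVec E → ℝ, Continuous f → (∀ μ, 0 ≤ f μ) →
      ∫⁻ μ, ENNReal.ofReal (f μ) ∂(𝕄 : Measure (ProbVec E)) ≤
      ∫⁻ μ, ENNReal.ofReal (f μ) ∂(𝕄' : Measure (ProbVec E)) := by
    intro 𝕄 𝕄' h h' f hf hf0
    obtain ⟨e, he, h1⟩ := compare hMmeas hMnn hint hP hc hN hf hf0 lam hK hx hlamUniq 𝕄 h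
    obtain ⟨e', he', h2⟩ := compare hMmeas hMnn hint hP hc hN hf hf0 lam hK hx hlamUniq 𝕄' h'
    have hlim : Tendsto (fun n => ∫⁻ μ, ENNReal.ofReal (f μ) ∂(𝕄' : Measure (ProbVec E)) +
        (e' n + e n)) atTop (𝓝 (∫⁻ μ, ENNReal.ofReal (f μ) ∂(𝕄' : Measure (ProbVec E)) + (0 + 0))) :=
      tendsto_const_nhds.add (he'.add he)
    rw [add_zero, add_zero] at hlim
    refine ge_of_tendsto' hlim fun n => ?_
    rw [← add_assoc]
    exact (h1 n).1.trans (add_le_add_left (h2 n).2 _)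
  refine Subtype.ext (?_ : (𝕄 : Measure (ProbVec E)) = (𝕄' : Measure (ProbVec E)))
  have : IsFiniteMeasure (𝕄 : Measure (ProbVec E)) := inferInstance
  have : IsFiniteMeasure (𝕄' : Measure (ProbVec E)) := inferInstance
  refine ext_of_forall_lintegral_eq_of_IsFiniteMeasure fun f => ?_
  have hf : Continuous fun μ => (f μ : ℝ) := NNReal.continuous_coe.comp f.continuous
  have := le_antisymm (key 𝕄 𝕄' h𝕄 h𝕄' _ hf fun _ => NNReal.coe_nonneg _)
    (key 𝕄' 𝕄 h𝕄' h𝕄 _ hf fun _ => NNReal.coe_nonneg _)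
  simpa using this

end Conv
set_option linter.unusedSectionVars false
section Exist

variable {E F : Type*} [Fintype E] [MeasurableSpace F]
variable {φ : Measure F} [SigmaFinite φ] {M : F → E → E → ℝ}

lemma fk_add (hMmeas : ∀ i j, Measurable fun y => M y i j)
    (hMnn : ∀ y i j, 0 ≤ M y i j) (hint : ∀ i j, Integrable (fun y => M y i j) φ)
    {f g : ProbVec E → ℝ} (hf : Continuous f) (hg : Continuous g) :
    filterKernel M φ (f + g) = filterKernel M φ f + filterKernel M φ g := by
  funext μ
  rw [Pi.add_apply, filterKernel_eq hMnn μ, filterKernel_eq hMnn μ, filterKernel_eq hMnn μ,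
    ← integral_add (integrand_integrable hMmeas hint μ hf _)
      (integrand_integrable hMmeas hint μ hg _)]
  simp only [Pi.add_apply, add_mul]

lemma fk_smul (c : ℝ) (f : ProbVec E → ℝ) :
    filterKernel M φ (c • f) = c • filterKernel M φ f := by
  funext μ
  simp only [filterKernel, Pi.smul_apply, smul_eq_mul, mul_assoc]
  rw [integral_const_mul]

lemma fk_one (hint : ∀ i j, Integrable (fun y => M y i j) φ)
    (hP : ∀ i, ∑ j, transMat M φ i j = 1) :
    filterKernel M φ (1 : ProbVec E → ℝ) = 1 := by
  funext μ
  simp only [filterKernel, Pi.one_apply, one_mul, rowTot_eq]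
  rw [tot_integral hint hP, pv_sum]

lemma it_cont (hMmeas : ∀ i j, Measurable fun y => M y i j)
    (hMnn : ∀ y i j, 0 ≤ M y i j) (hint : ∀ i j, Integrable (fun y => M y i j) φ)
    (d : ProbVec E) {f : ProbVec E → ℝ} (hf : Continuous f) (n : ℕ) :
    Continuous ((filterKernel M φ)^[n] f) := by
  induction n with
  | zero => exact hf
  | succ n ih => rw [Function.iterate_succ_apply']; exact feller hMmeas hMnn hint d ih

lemma it_add (hMmeas : ∀ i j, Measurable fun y => M y i j)
    (hMnn : ∀ y i j, 0 ≤ M y i j) (hint : ∀ i j, Integrable (fun y => M y i j) φ)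
    (d : ProbVec E) {f g : ProbVec E → ℝ} (hf : Continuous f) (hg : Continuous g) (n : ℕ) :
    (filterKernel M φ)^[n] (f + g) = (filterKernel M φ)^[n] f + (filterKernel M φ)^[n] g := by
  induction n with
  | zero => rfl
  | succ n ih =>
    simp only [Function.iterate_succ_apply']
    rw [ih, fk_add hMmeas hMnn hint (it_cont hMmeas hMnn hint d hf n)
      (it_cont hMmeas hMnn hint d hg n)]

lemma it_smul (c : ℝ) (f : ProbVec E → ℝ) (n : ℕ) :
    (filterKernel M φ)^[n] (c • f) = c • (filterKernel M φ)^[n] f := by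
  induction n with
  | zero => rfl
  | succ n ih => simp only [Function.iterate_succ_apply']; rw [ih, fk_smul]

lemma it_one (hint : ∀ i j, Integrable (fun y => M y i j) φ)
    (hP : ∀ i, ∑ j, transMat M φ i j = 1) (n : ℕ) :
    (filterKernel M φ)^[n] (1 : ProbVec E → ℝ) = 1 := by
  induction n with
  | zero => rfl
  | succ n ih => rw [Function.iterate_succ_apply', ih, fk_one hint hP]

lemma it_nonneg (hMnn : ∀ y i j, 0 ≤ M y i j) {f : ProbVec E → ℝ} (hf : ∀ μ, 0 ≤ f μ) (n : ℕ) :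
    ∀ μ, 0 ≤ (filterKernel M φ)^[n] f μ := by
  induction n with
  | zero => exact hf
  | succ n ih => rw [Function.iterate_succ_apply']; exact filterKernel_nonneg hMnn ih

lemma it_le (hMmeas : ∀ i j, Measurable fun y => M y i j)
    (hMnn : ∀ y i j, 0 ≤ M y i j) (hint : ∀ i j, Integrable (fun y => M y i j) φ)
    (hP : ∀ i, ∑ j, transMat M φ i j = 1)
    {f : ProbVec E → ℝ} (hf : Continuous f) {C : ℝ} (hC : ∀ μ, |f μ| ≤ C) (n : ℕ) (μ : ProbVec E) :
    |(filterKernel M φ)^[n] f μ| ≤ C := by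
  have c1 : Continuous (C • (1 : ProbVec E → ℝ)) := continuous_one.const_smul C
  have c2 : Continuous ((-1 : ℝ) • f) := continuous_const.smul hf
  have h1 := it_nonneg (φ := φ) (M := M) hMnn (f := C • (1 : ProbVec E → ℝ) + f) (fun ν => by
    have := neg_le_of_abs_le (hC ν)
    simp only [Pi.add_apply, Pi.smul_apply, Pi.one_apply, smul_eq_mul]; linarith) n μ
  have h2 := it_nonneg (φ := φ) (M := M) hMnn (f := C • (1 : ProbVec E → ℝ) + (-1 : ℝ) • f)
    (fun ν => by
    have := le_of_abs_le (hC ν)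
    simp only [Pi.add_apply, Pi.smul_apply, Pi.one_apply, smul_eq_mul]; linarith) n μ
  rw [it_add hMmeas hMnn hint μ c1 hf, it_smul, it_one hint hP] at h1
  rw [it_add hMmeas hMnn hint μ c1 c2, it_smul, it_smul, it_one hint hP] at h2
  simp only [Pi.add_apply, Pi.smul_apply, Pi.one_apply, smul_eq_mul] at h1 h2
  rw [abs_le]; constructor <;> linarith

/-- Cesaro averages -/
noncomputable def ces (φ : Measure F) (M : F → E → E → ℝ) (d : ProbVec E) (f : ProbVec E → ℝ)
    (n : ℕ) : ℝ := (∑ k ∈ Finset.range n, (filterKernel M φ)^[k] f d) / n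

lemma ces_lim (hMmeas : ∀ i j, Measurable fun y => M y i j)
    (hMnn : ∀ y i j, 0 ≤ M y i j) (hint : ∀ i j, Integrable (fun y => M y i j) φ)
    (hP : ∀ i, ∑ j, transMat M φ i j = 1) (d : ProbVec E)
    {f : ProbVec E → ℝ} (hf : Continuous f) :
    ∃ l, Tendsto (ces φ M d f) (hyperfilter ℕ) (𝓝 l) := by
  obtain ⟨C, hC⟩ := bddcont hf
  have hC0 : 0 ≤ C := (abs_nonneg _).trans (hC d)
  have hb : ∀ n, ces φ M d f n ∈ Set.Icc (-C) C := fun n => by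
    rw [Set.mem_Icc, ← abs_le, ces, abs_div, Nat.abs_cast]
    refine div_le_of_le_mul₀ (Nat.cast_nonneg _) hC0 ?_
    refine (Finset.abs_sum_le_sum_abs _ _).trans ?_
    refine (Finset.sum_le_card_nsmul _ _ C fun k _ =>
      it_le hMmeas hMnn hint hP hf hC k d).trans (le_of_eq ?_)
    rw [Finset.card_range, nsmul_eq_mul, mul_comm]
  obtain ⟨l, _, hl⟩ := (isCompact_Icc (a := -C) (b := C)).ultrafilter_le_nhds
    ((hyperfilter ℕ).map (ces φ M d f)) (by
      rw [le_principal_iff]; exact Filter.mem_map.2 (univ_mem' hb))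
  exact ⟨l, hl⟩

lemma piInv_exists (hMmeas : ∀ i j, Measurable fun y => M y i j)
    (hMnn : ∀ y i j, 0 ≤ M y i j) (hint : ∀ i j, Integrable (fun y => M y i j) φ)
    (hP : ∀ i, ∑ j, transMat M φ i j = 1) (d : ProbVec E) :
    ∃ 𝕄 : ProbabilityMeasure (ProbVec E), IsPiInvariant M φ 𝕄 := by
  choose! L hL using fun (f : ProbVec E → ℝ) (hf : Continuous f) =>
    ces_lim hMmeas hMnn hint hP d hf
  have huniq : ∀ {f l}, Continuous f → Tendsto (ces φ M d f) (hyperfilter ℕ) (𝓝 l) → L f = l :=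
    fun hf h => tendsto_nhds_unique (hL _ hf) h
  have hadd : ∀ {f g}, Continuous f → Continuous g → L (f + g) = L f + L g := fun {f g} hf hg => by
    refine huniq (hf.add hg) (((hL f hf).add (hL g hg)).congr fun n => ?_)
    simp only [ces, it_add hMmeas hMnn hint d hf hg, Pi.add_apply, Finset.sum_add_distrib, add_div]
  have hsmul : ∀ (c : ℝ) {f}, Continuous f → L (c • f) = c * L f := fun c f hf => by
    refine huniq (continuous_const.smul hf) (((hL f hf).const_mul c).congr fun n => ?_)
    simp only [ces, it_smul, Pi.smul_apply, smul_eq_mul, ← Finset.mul_sum, mul_div_assoc]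
  have hnn : ∀ {f}, Continuous f → (∀ μ, 0 ≤ f μ) → 0 ≤ L f := fun {f} hf h0 =>
    ge_of_tendsto' (hL f hf) fun n =>
      div_nonneg (Finset.sum_nonneg fun k _ => it_nonneg hMnn h0 k d) (Nat.cast_nonneg _)
  have hle : (hyperfilter ℕ : Filter ℕ) ≤ atTop := Nat.hyperfilter_le_atTop
  have hone : L 1 = 1 := by
    refine huniq continuous_const (tendsto_const_nhds.congr' ?_)
    filter_upwards [hle (eventually_gt_atTop 0)] with n hn
    simp only [ces, it_one hint hP, Pi.one_apply, Finset.sum_const, Finset.card_range,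
      nsmul_eq_mul, mul_one]
    rw [div_self (by exact_mod_cast (ne_of_gt hn))]
  have hinv : ∀ {f}, Continuous f → L (filterKernel M φ f) = L f := fun {f} hf => by
    have hf' := feller hMmeas hMnn hint d hf
    obtain ⟨C, hC⟩ := bddcont hf
    have h0 : Tendsto (fun n : ℕ => ((filterKernel M φ)^[n] f d - f d) / n)
        (hyperfilter ℕ) (𝓝 0) := by
      refine Tendsto.mono_left ?_ hle
      refine squeeze_zero_norm (a := fun n : ℕ => (C + C) / n) (fun n => ?_)
        (tendsto_const_div_atTop_nhds_zero_nat _)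
      rw [Real.norm_eq_abs, abs_div, Nat.abs_cast]
      gcongr
      exact (abs_sub _ _).trans (add_le_add (it_le hMmeas hMnn hint hP hf hC n d) (hC d))
    refine huniq hf' ?_
    have := (hL f hf).add h0
    rw [add_zero] at this
    refine this.congr fun n => ?_
    rw [ces, ces, ← add_div]
    congr 1
    have e := Finset.sum_range_sub (fun k => (filterKernel M φ)^[k] f d) n
    rw [Finset.sum_sub_distrib] at e
    simp only [Function.iterate_succ_apply, Function.iterate_zero, id] at e
    linarith
  let Λ : CompactlySupportedContinuousMap (ProbVec E) ℝ →ₚ[ℝ] ℝ := PositiveLinearMap.mk₀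
    { toFun := fun f => L (fun x => f x)
      map_add' := fun f g => hadd f.continuous g.continuous
      map_smul' := fun c f => hsmul c f.continuous } (fun f hf => hnn f.continuous hf)
  have hΛ : ∀ {f : ProbVec E → ℝ}, Continuous f → ∫ x, f x ∂(RealRMK.rieszMeasure Λ) = L f :=
    fun {f} hf => RealRMK.integral_rieszMeasure Λ
      (CompactlySupportedContinuousMap.continuousMapEquiv ⟨f, hf⟩)
  have hprob : IsProbabilityMeasure (RealRMK.rieszMeasure Λ) := by
    have h := hΛ (f := 1) continuous_const
    simp only [Pi.one_apply, integral_const, smul_eq_mul, mul_one, hone, Measure.real] at h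
    exact ⟨(ENNReal.toReal_eq_one_iff _).1 h⟩
  refine ⟨⟨RealRMK.rieszMeasure Λ, hprob⟩, fun f hf => ?_⟩
  exact (hΛ (feller hMmeas hMnn hint d hf.1)).trans ((hinv hf.1).trans (hΛ hf.1).symm)

end Exist
set_option linter.unusedSectionVars false
section Obs

variable {E F : Type*} [Fintype E] [MeasurableSpace F]
variable {φ : Measure F} [SigmaFinite φ] {M : F → E → E → ℝ}

lemma cyl_ext (P Q : Measure (ℕ → F)) [IsProbabilityMeasure P] [IsProbabilityMeasure Q]
    (h : ∀ (n : ℕ) (A : Set (Fin n → F)), MeasurableSet A →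
      P {y : ℕ → F | (fun k : Fin n => y k) ∈ A} = Q {y : ℕ → F | (fun k : Fin n => y k) ∈ A}) :
    P = Q := by
  refine ext_of_generate_finite (measurableCylinders fun _ : ℕ => F)
    generateFrom_measurableCylinders.symm isPiSystem_measurableCylinders ?_ (by simp)
  intro t ht
  obtain ⟨s, S, hS, rfl⟩ := (mem_measurableCylinders t).1 ht
  have hlt : ∀ i : s, (i : ℕ) < s.sup id + 1 := fun i =>
    Nat.lt_succ_of_le (Finset.le_sup (f := id) i.2)
  have hm : Measurable fun (v : Fin (s.sup id + 1) → F) (i : s) => v ⟨i, hlt i⟩ :=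
    measurable_pi_lambda _ fun i => measurable_pi_apply _
  exact h (s.sup id + 1) _ (hm hS)

lemma obs_inj (hMmeas : ∀ i j, Measurable fun y => M y i j)
    (Q : ProbVec E → Measure (ℕ → F))
    (hQprob : ∀ μ, IsProbabilityMeasure (Q μ))
    (hQ : ∀ (μ : ProbVec E) (n : ℕ) (A : Set (Fin n → F)), MeasurableSet A →
      Q μ {y : ℕ → F | (fun k : Fin n => y k) ∈ A} =
        ∫⁻ v in A, ENNReal.ofReal (rowTot (rowIter M (μ : E → ℝ) (List.ofFn v)))
          ∂(Measure.pi fun _ => φ))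
    (hObs : ∀ μ ν : ProbVec E, Q μ = Q ν → μ = ν)
    (v : E → ℝ) (hv : ∀ n, rho φ M n v = 0) : v = 0 := by
  by_contra hne
  have h0 : ∑ i, v i = 0 := by simpa [rho] using hv 0
  have hpm : ∑ i, (max (v i) 0 - max (-(v i)) 0) = 0 := by
    refine Eq.trans ?_ h0
    refine Finset.sum_congr rfl fun i _ => ?_
    rcases le_total 0 (v i) with h | h
    · rw [max_eq_left h, max_eq_right (by linarith)]; ring
    · rw [max_eq_right h, max_eq_left (by linarith)]; ring
  rw [Finset.sum_sub_distrib, sub_eq_zero] at hpm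
  set t := ∑ i, max (v i) 0 with ht
  have t0 : 0 < t := by
    refine lt_of_le_of_ne (Finset.sum_nonneg fun i _ => le_max_right _ _) fun h => hne ?_
    have e1 := (Finset.sum_eq_zero_iff_of_nonneg fun i _ => le_max_right (v i) 0).1 h.symm
    have e2 := (Finset.sum_eq_zero_iff_of_nonneg fun i _ => le_max_right (-(v i)) 0).1
      (hpm.symm.trans h.symm)
    funext i
    have a := e1 i (Finset.mem_univ _)
    have b := e2 i (Finset.mem_univ _)
    have a' := le_max_left (v i) 0
    have b' := le_max_left (-(v i)) 0
    simp only [Pi.zero_apply]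
    linarith
  let μ : ProbVec E := mkPV (fun i => max (v i) 0 / t)
    (fun i => div_nonneg (le_max_right _ _) t0.le) (by
      rw [← Finset.sum_div, ← ht, div_self t0.ne'])
  let ν : ProbVec E := mkPV (fun i => max (-(v i)) 0 / t)
    (fun i => div_nonneg (le_max_right _ _) t0.le) (by
      rw [← Finset.sum_div, ← hpm, div_self t0.ne'])
  have hvd : v = fun i => t * (μ : E → ℝ) i + (-t) * (ν : E → ℝ) i := by
    funext i
    show v i = t * (max (v i) 0 / t) + (-t) * (max (-(v i)) 0 / t)
    have : t * (max (v i) 0 / t) + (-t) * (max (-(v i)) 0 / t) = max (v i) 0 - max (-(v i)) 0 := by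
      field_simp; ring
    rw [this]
    rcases le_total 0 (v i) with h | h
    · rw [max_eq_left h, max_eq_right (by linarith)]; ring
    · rw [max_eq_right h, max_eq_left (by linarith)]; ring
  have hμν : μ = ν := by
    refine hObs _ _ ?_
    have := hQprob μ
    have := hQprob ν
    refine cyl_ext _ _ fun n A hA => ?_
    rw [hQ μ n A hA, hQ ν n A hA]
    refine lintegral_congr_ae (ae_restrict_of_ae ?_)
    have h := hv n
    have hm : Measurable fun w : Fin n → F => ‖∑ i, rowIter M v (List.ofFn w) i‖ₑ :=
      enormsum_meas.comp ((rowIter_meas hMmeas n).comp measurable_prodMk_left)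
    rw [rho, ← lintegral_rowIter hMmeas enormsum_meas, lintegral_eq_zero_iff hm] at h
    filter_upwards [h] with w hw
    rw [hvd, rowIter_sub] at hw
    simp only [Pi.zero_apply, enorm_eq_zero, Finset.sum_add_distrib, ← Finset.mul_sum] at hw
    rw [rowTot_eq, rowTot_eq]
    congr 1
    have : t * (∑ i, rowIter M (μ : E → ℝ) (List.ofFn w) i -
      ∑ i, rowIter M (ν : E → ℝ) (List.ofFn w) i) = 0 := by linarith
    rcases mul_eq_zero.1 this with h | h
    · exact absurd h t0.ne'
    · linarith
  apply hne
  rw [hvd, hμν]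
  funext i
  simp

lemma hint_of [DecidableEq E] (hMmeas : ∀ i j, Measurable fun y => M y i j)
    (hMnn : ∀ y i j, 0 ≤ M y i j)
    (Q : ProbVec E → Measure (ℕ → F))
    (hQprob : ∀ μ, IsProbabilityMeasure (Q μ))
    (hQ : ∀ (μ : ProbVec E) (n : ℕ) (A : Set (Fin n → F)), MeasurableSet A →
      Q μ {y : ℕ → F | (fun k : Fin n => y k) ∈ A} =
        ∫⁻ v in A, ENNReal.ofReal (rowTot (rowIter M (μ : E → ℝ) (List.ofFn v)))
          ∂(Measure.pi fun _ => φ)) (i j : E) : Integrable (fun y => M y i j) φ := by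
  have hs : ∀ k, (0 : E → ℝ) k ≤ (Pi.single i 1 : E → ℝ) k := by
    have : (0 : E → ℝ) ≤ Pi.single i 1 := by rw [Pi.single_nonneg]; exact zero_le_one
    exact this
  let μ : ProbVec E := mkPV (Pi.single i 1) hs (by simp)
  have := hQprob μ
  have h := hQ μ 1 Set.univ MeasurableSet.univ
  simp only [Set.mem_univ, Set.ofPred_true, measure_univ, Measure.restrict_univ, rowTot_eq] at h
  have h2 := lintegral_rowIter (φ := φ) hMmeas mass_meas 1 (μ : E → ℝ)
  simp only [mass] at h2
  rw [← h, Function.iterate_one] at h2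
  refine ⟨(hMmeas i j).aestronglyMeasurable, ?_⟩
  rw [hasFiniteIntegral_iff_ofReal (ae_of_all _ fun y => hMnn y i j)]
  refine lt_of_le_of_lt ?_ (h2 ▸ ENNReal.one_lt_top)
  refine lintegral_mono fun y => ENNReal.ofReal_le_ofReal ?_
  have hsi : ∀ j, T1 M y (μ : E → ℝ) j = M y i j := fun j => by
    show rowMul M (Pi.single i 1) y j = _
    rw [rowMul_apply, Finset.sum_eq_single i]
    · simp
    · intro b _ hb; simp [Pi.single_eq_of_ne hb]
    · simp
  simp only [hsi]
  exact Finset.single_le_sum (f := fun j => M y i j) (fun j _ => hMnn y i j) (Finset.mem_univ j)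

lemma lam_pos [DecidableEq E] (hMnn : ∀ y i j, 0 ≤ M y i j)
    (hPirr : ∀ i j : E, ∃ n : ℕ, 0 < matPow (transMat M φ) n i j)
    (lam : ProbVec E)
    (hlamInv : ∀ j, ∑' i, (lam : E → ℝ) i * transMat M φ i j = (lam : E → ℝ) j) (j : E) :
    0 < (lam : E → ℝ) j := by
  have hP0 : ∀ i j, 0 ≤ transMat M φ i j := fun i j => integral_nonneg fun y => hMnn y i j
  have hp0 : ∀ n i j, 0 ≤ matPow (transMat M φ) n i j := fun n => by
    induction n with
    | zero => intro i j; simp only [matPow]; split_ifs <;> simp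
    | succ n ih => intro i j; exact tsum_nonneg fun k => mul_nonneg (ih i k) (hP0 k j)
  have hpow : ∀ n j, ∑ i, (lam : E → ℝ) i * matPow (transMat M φ) n i j = (lam : E → ℝ) j := by
    intro n
    induction n with
    | zero => intro j; simp [matPow]
    | succ n ih =>
      intro j
      simp only [matPow, tsum_fintype, Finset.mul_sum]
      rw [Finset.sum_comm]
      simp only [← mul_assoc, ← Finset.sum_mul, ih]
      rw [← hlamInv j, tsum_fintype]
  have hex : ∃ i, 0 < (lam : E → ℝ) i := by
    by_contra! hcon
    have := Finset.sum_nonpos fun i (_ : i ∈ Finset.univ) => hcon i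
    rw [pv_sum] at this
    linarith
  obtain ⟨i, hi⟩ := hex
  obtain ⟨n, hn⟩ := hPirr i j
  rw [← hpow n j]
  exact (mul_pos hi hn).trans_le (Finset.single_le_sum
    (f := fun i => (lam : E → ℝ) i * matPow (transMat M φ) n i j)
    (fun i _ => mul_nonneg (lam.2.1 i) (hp0 n i j)) (Finset.mem_univ i))

end Obs

/-- If `E` is a finite set and the observability condition (O) holds (`Q_μ = Q_ν`
implies `μ = ν`), then the filter transition kernel `Π` admits a unique invariant
probability measure. -/
theorem unique_invariant_measure_of_observability_finite
    {E : Type*} [Fintype E] [Nonempty E] [DecidableEq E]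
    {F : Type*} [TopologicalSpace F] [PolishSpace F] [MeasurableSpace F] [BorelSpace F]
    (φ : Measure F) [SigmaFinite φ]
    (M : F → E → E → ℝ)
    (hMmeas : ∀ i j, Measurable fun y => M y i j)
    (hMnn : ∀ y i j, 0 ≤ M y i j)
    (hMbd : ∀ᵐ y ∂φ, ∃ C : ℝ, ∀ (i : E) (s : Finset E), ∑ j ∈ s, M y i j ≤ C)
    (hPtrans : ∀ i, HasSum (fun j => transMat M φ i j) 1)
    (hPirr : ∀ i j : E, ∃ n : ℕ, 0 < matPow (transMat M φ) n i j)
    (lam : ProbVec E)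
    (hlamInv : ∀ j, ∑' i, (lam : E → ℝ) i * transMat M φ i j = (lam : E → ℝ) j)
    (hlamUniq : ∀ ρ : ProbVec E,
      (∀ j, ∑' i, (ρ : E → ℝ) i * transMat M φ i j = (ρ : E → ℝ) j) → ρ = lam)
    (Q : ProbVec E → Measure (ℕ → F))
    (hQprob : ∀ μ, IsProbabilityMeasure (Q μ))
    (hQ : ∀ (μ : ProbVec E) (n : ℕ) (A : Set (Fin n → F)), MeasurableSet A →
      Q μ {y : ℕ → F | (fun k : Fin n => y k) ∈ A} =
        ∫⁻ v in A, ENNReal.ofReal (rowTot (rowIter M (μ : E → ℝ) (List.ofFn v)))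
          ∂(Measure.pi fun _ => φ))
    (hObs : ∀ μ ν : ProbVec E, Q μ = Q ν → μ = ν) :
    ∃! 𝕄 : ProbabilityMeasure (ProbVec E), IsPiInvariant M φ 𝕄 := by
  have hP : ∀ i, ∑ j, transMat M φ i j = 1 := fun i => by
    have := (hPtrans i).tsum_eq
    rwa [tsum_fintype] at this
  have hint := hint_of hMmeas hMnn Q hQprob hQ
  obtain ⟨N, c, hc, hN⟩ := rho_bound hMmeas hMnn hint hP
    (obs_inj hMmeas Q hQprob hQ hObs)
  obtain ⟨𝕄, h𝕄⟩ := piInv_exists hMmeas hMnn hint hP lam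
  have hpos := lam_pos hMnn hPirr lam hlamInv
  have hK : 0 ≤ ∑ i, ((lam : E → ℝ) i)⁻¹ :=
    Finset.sum_nonneg fun i _ => inv_nonneg.2 (hpos i).le
  have hx : ∀ μ : ProbVec E, DD (∑ i, ((lam : E → ℝ) i)⁻¹) ((μ : E → ℝ), (lam : E → ℝ)) :=
    fun μ => ⟨μ.2.1, lam.2.1, fun i => by
      refine (pv_le_one μ i).trans ?_
      show 1 ≤ (∑ i, ((lam : E → ℝ) i)⁻¹) * (lam : E → ℝ) i
      rw [← div_le_iff₀ (hpos i), one_div]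
      exact Finset.single_le_sum (f := fun i => ((lam : E → ℝ) i)⁻¹)
        (fun i _ => inv_nonneg.2 (hpos i).le) (Finset.mem_univ i)⟩
  exact ⟨𝕄, h𝕄, fun 𝕄' h' =>
    piInv_unique hMmeas hMnn hint hP hc hN lam hK hx hlamUniq 𝕄' 𝕄 h' h𝕄⟩
end

section
/- Suppose in addition that E and F are finite sets, φ is the counting measure on F, and the signal transition matrix P is aperiodic. If there exist y_1, …, y_n ∈ F such that the matrix N = M(y_1)⋯M(y_n) is nonzero and subrectangular (i.e. N_{ij} > 0 and N_{kl} > 0 imply N_{il} > 0 and N_{kj} > 0), then the filter transition kernel Π admits a unique Π-invariant probability measure on P(E). -/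
open MeasureTheory Filter Topology ENNReal

/-- The matrix product `M(y₁)⋯M(yₙ)` along a list of observations. -/
noncomputable def prodM {E F : Type*} [Fintype E] [DecidableEq E] (M : F → E → E → ℝ)
    (ys : List F) : Matrix E E ℝ :=
  (ys.map fun y => Matrix.of fun i j => M y i j).prod

namespace Kai

set_option linter.unusedSectionVars false
set_option linter.unusedVariables false

noncomputable section

def Mm {E F : Type*} (M : F → E → E → ℝ) (y : F) : Matrix E E ℝ := Matrix.of fun i j => M y i j

def mass {E : Type*} [Fintype E] (v : E → ℝ) : ℝ := ∑ j, v j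

def tm {E : Type*} [Fintype E] (A : Matrix E E ℝ) : ℝ := ∑ j, ∑ i, A i j

def OscLE {E : Type*} [Fintype E] (A : Matrix E E ℝ) (c : ℝ) : Prop :=
  ∀ i j k, |A i j * (∑ p, A p k) - A i k * (∑ p, A p j)| ≤ c * (∑ p, A p j) * (∑ p, A p k)

def NN {E : Type*} (A : Matrix E E ℝ) : Prop := ∀ i j, 0 ≤ A i j

section matrix
variable {E : Type*} [Fintype E]

lemma NN.mul {A B : Matrix E E ℝ} (hA : NN A) (hB : NN B) : NN (A * B) := by
  intro i j
  rw [Matrix.mul_apply]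
  exact Finset.sum_nonneg fun k _ => mul_nonneg (hA _ _) (hB _ _)

lemma tm_nonneg {A : Matrix E E ℝ} (hA : NN A) : 0 ≤ tm A :=
  Finset.sum_nonneg fun _ _ => Finset.sum_nonneg fun _ _ => hA _ _

lemma colsum_mul (A N : Matrix E E ℝ) (j : E) :
    ∑ i, (A * N) i j = ∑ p, (∑ i, A i p) * N p j := by
  simp_rw [Matrix.mul_apply, Finset.sum_mul]
  rw [Finset.sum_comm]

lemma osc_one {A : Matrix E E ℝ} (hA : NN A) : OscLE A 1 := by
  intro i j k
  have h1 : A i j ≤ ∑ p, A p j := Finset.single_le_sum (f := fun p => A p j)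
    (fun p _ => hA p j) (Finset.mem_univ i)
  have h2 : A i k ≤ ∑ p, A p k := Finset.single_le_sum (f := fun p => A p k)
    (fun p _ => hA p k) (Finset.mem_univ i)
  have h3 := hA i j
  have h4 := hA i k
  rw [abs_le]
  constructor <;> nlinarith [mul_le_mul_of_nonneg_right h1 (h4.trans h2),
    mul_le_mul_of_nonneg_right h2 (h3.trans h1), mul_nonneg h3 (h4.trans h2),
    mul_nonneg h4 (h3.trans h1)]

lemma osc_mul {A N : Matrix E E ℝ} (hA : NN A) {c κ : ℝ} (hc : 0 ≤ c) (h : OscLE A c)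
    (hN : ∀ p q j k, |N p j * N q k - N q j * N p k| ≤
      (1 - κ) * (N p j * N q k + N q j * N p k)) : OscLE (A * N) (c * (1 - κ)) := by
  intro i j k
  simp_rw [colsum_mul]
  set s : E → ℝ := fun p => ∑ i, A i p with hs
  have hs0 : ∀ p, 0 ≤ s p := fun p => Finset.sum_nonneg fun _ _ => hA _ _
  have e1 : (A * N) i j * (∑ p, s p * N p k) - (A * N) i k * (∑ p, s p * N p j)
      = ∑ p, ∑ q, N p j * N q k * (A i p * s q - A i q * s p) := by
    simp_rw [mul_sub, Finset.sum_sub_distrib, Matrix.mul_apply, Finset.sum_mul_sum]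
    congr 1
    · refine Finset.sum_congr rfl fun p _ => Finset.sum_congr rfl fun q _ => by ring
    · rw [Finset.sum_comm]
      refine Finset.sum_congr rfl fun p _ => Finset.sum_congr rfl fun q _ => by ring
  have e2 : ∑ p, ∑ q, N p j * N q k * (A i p * s q - A i q * s p)
      = ∑ p, ∑ q, (N p j * N q k - N q j * N p k) * (A i p * s q - A i q * s p) / 2 := by
    have : ∑ p, ∑ q, N p j * N q k * (A i p * s q - A i q * s p)
      = ∑ p, ∑ q, N q j * N p k * (A i q * s p - A i p * s q) := Finset.sum_comm
    have h2 : ∑ p, ∑ q, (N p j * N q k - N q j * N p k) * (A i p * s q - A i q * s p) / 2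
      = (∑ p, ∑ q, N p j * N q k * (A i p * s q - A i q * s p)
        + ∑ p, ∑ q, N q j * N p k * (A i q * s p - A i p * s q)) / 2 := by
      simp_rw [← Finset.sum_add_distrib, Finset.sum_div]
      refine Finset.sum_congr rfl fun p _ => Finset.sum_congr rfl fun q _ => by ring
    rw [h2, ← this]; ring
  have e3 : c * (1 - κ) * (∑ p, s p * N p j) * (∑ p, s p * N p k)
      = ∑ p, ∑ q, c * (1 - κ) * (N p j * N q k + N q j * N p k) * (s p * s q) / 2 := by
    have h1 : c * (1 - κ) * (∑ p, s p * N p j) * (∑ p, s p * N p k)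
      = ∑ p, ∑ q, c * (1 - κ) * (N p j * N q k) * (s p * s q) := by
      rw [mul_assoc, Finset.sum_mul_sum, Finset.mul_sum]
      simp_rw [Finset.mul_sum]
      refine Finset.sum_congr rfl fun p _ => Finset.sum_congr rfl fun q _ => by ring
    have h1' : ∑ p, ∑ q, c * (1 - κ) * (N p j * N q k) * (s p * s q)
      = ∑ p, ∑ q, c * (1 - κ) * (N q j * N p k) * (s q * s p) := Finset.sum_comm
    have h2 : ∑ p, ∑ q, c * (1 - κ) * (N p j * N q k + N q j * N p k) * (s p * s q) / 2
      = (∑ p, ∑ q, c * (1 - κ) * (N p j * N q k) * (s p * s q)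
        + ∑ p, ∑ q, c * (1 - κ) * (N q j * N p k) * (s q * s p)) / 2 := by
      simp_rw [← Finset.sum_add_distrib, Finset.sum_div]
      refine Finset.sum_congr rfl fun p _ => Finset.sum_congr rfl fun q _ => by ring
    rw [h2, ← h1', h1]; ring
  rw [e1, e2, e3]
  refine (Finset.abs_sum_le_sum_abs _ _).trans (Finset.sum_le_sum fun p _ => ?_)
  refine (Finset.abs_sum_le_sum_abs _ _).trans (Finset.sum_le_sum fun q _ => ?_)
  rw [abs_div, abs_mul, abs_two]
  have h1 := hN p q j k
  have h2 := h i p q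
  have h3 := mul_le_mul h1 h2 (abs_nonneg _) ((abs_nonneg _).trans h1)
  have : (1 - κ) * (N p j * N q k + N q j * N p k) * (c * s p * s q) =
    c * (1 - κ) * (N p j * N q k + N q j * N p k) * (s p * s q) := by ring
  rw [← this]
  exact div_le_div_of_nonneg_right h3 (by norm_num)

lemma osc_mul' {A N : Matrix E E ℝ} (hA : NN A) (hN : NN N) {c : ℝ} (hc : 0 ≤ c)
    (h : OscLE A c) : OscLE (A * N) c := by
  have := osc_mul (N := N) (κ := 0) hA hc h (fun p q j k => by
    have h1 := mul_nonneg (hN p j) (hN q k)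
    have h2 := mul_nonneg (hN q j) (hN p k)
    rw [abs_le]; constructor <;> linarith)
  simpa using this

lemma exists_kappa {N : Matrix E E ℝ} (hN : NN N)
    (hsub : ∀ i j k l : E, 0 < N i j → 0 < N k l → 0 < N i l ∧ 0 < N k j) :
    ∃ κ : ℝ, 0 < κ ∧ κ ≤ 1 ∧ ∀ p q j k, |N p j * N q k - N q j * N p k| ≤
      (1 - κ) * (N p j * N q k + N q j * N p k) := by
  have key : ∀ x : E × E × E × E, ∃ κ : ℝ, 0 < κ ∧ κ ≤ 1 ∧ ∀ κ', 0 < κ' → κ' ≤ κ →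
      |N x.1 x.2.2.1 * N x.2.1 x.2.2.2 - N x.2.1 x.2.2.1 * N x.1 x.2.2.2| ≤
      (1 - κ') * (N x.1 x.2.2.1 * N x.2.1 x.2.2.2 + N x.2.1 x.2.2.1 * N x.1 x.2.2.2) := by
    rintro ⟨p, q, j, k⟩
    dsimp only
    have ha := mul_nonneg (hN p j) (hN q k)
    have hb := mul_nonneg (hN q j) (hN p k)
    have hab : 0 < N p j * N q k ↔ 0 < N q j * N p k := by
      constructor
      · intro h
        have h1 : 0 < N p j := lt_of_le_of_ne (hN _ _) (fun e => by simp [← e] at h)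
        have h2 : 0 < N q k := lt_of_le_of_ne (hN _ _) (fun e => by simp [← e] at h)
        obtain ⟨h3, h4⟩ := hsub p j q k h1 h2
        exact mul_pos h4 h3
      · intro h
        have h1 : 0 < N q j := lt_of_le_of_ne (hN _ _) (fun e => by simp [← e] at h)
        have h2 : 0 < N p k := lt_of_le_of_ne (hN _ _) (fun e => by simp [← e] at h)
        obtain ⟨h3, h4⟩ := hsub q j p k h1 h2
        exact mul_pos h4 h3
    set a := N p j * N q k
    set b := N q j * N p k
    rcases ha.eq_or_lt with h0 | h0
    · have : b = 0 := by
        by_contra hne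
        have := hab.2 (lt_of_le_of_ne hb (Ne.symm hne))
        linarith
      refine ⟨1, one_pos, le_rfl, fun κ' _ _ => ?_⟩
      rw [this, ← h0]; simp
    · have hb0 := hab.1 h0
      have hm : 0 < min a b := lt_min h0 hb0
      have hs : 0 < a + b := by linarith
      refine ⟨min a b / (a + b), div_pos hm hs, ?_, fun κ' h1 h2 => ?_⟩
      · rw [div_le_one hs]; linarith [min_le_left a b]
      · rw [le_div_iff₀ hs] at h2
        have := min_le_left a b
        have := min_le_right a b
        rw [abs_le]; constructor <;> nlinarith
  choose κ hκ using key
  by_cases hE : Nonempty (E × E × E × E)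
  · refine ⟨Finset.univ.inf' Finset.univ_nonempty κ, ?_, ?_, fun p q j k => ?_⟩
    · rw [Finset.lt_inf'_iff]; exact fun x _ => (hκ x).1
    · exact (Finset.inf'_le κ (Finset.mem_univ hE.some)).trans (hκ _).2.1
    · refine (hκ (p, q, j, k)).2.2 _ ?_ (Finset.inf'_le κ (Finset.mem_univ _))
      rw [Finset.lt_inf'_iff]; exact fun x _ => (hκ x).1
  · exact ⟨1, one_pos, le_rfl, fun p q j k => (hE ⟨(p, q, j, k)⟩).elim⟩

end matrix

section hat
variable {E : Type*} [Fintype E] [Nonempty E] [DecidableEq E]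

lemma pv_mass (μ : ProbVec E) : mass (μ : E → ℝ) = 1 := by
  have := μ.2.2
  exact (hasSum_fintype _).unique this

def mkPV (v : E → ℝ) (h0 : ∀ i, 0 ≤ v i) (h1 : mass v = 1) : ProbVec E :=
  ⟨v, h0, by have := hasSum_fintype v; rwa [show ∑ b, v b = 1 from h1] at this⟩

lemma mass_smul (a : ℝ) (v : E → ℝ) : mass (a • v) = a * mass v := by
  simp [mass, Finset.mul_sum]

lemma mass_nonneg {v : E → ℝ} (h : ∀ i, 0 ≤ v i) : 0 ≤ mass v :=
  Finset.sum_nonneg fun i _ => h i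

def dlt (i : E) : ProbVec E :=
  mkPV (Pi.single i 1) (fun j => by
    by_cases h : j = i
    · subst h; simp
    · simp [h]) (by simp [mass])

open Classical in
def nrm (v : E → ℝ) : ProbVec E :=
  if h : (∀ i, 0 ≤ v i) ∧ 0 < mass v then
    mkPV ((mass v)⁻¹ • v) (fun i => mul_nonneg (inv_nonneg.2 h.2.le) (h.1 i))
      (by rw [mass_smul, inv_mul_cancel₀ h.2.ne'])
  else dlt (Classical.arbitrary E)

lemma nrm_val {v : E → ℝ} (h : ∀ i, 0 ≤ v i) (hm : 0 < mass v) :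
    (nrm v : E → ℝ) = (mass v)⁻¹ • v := by
  rw [nrm, dif_pos ⟨h, hm⟩]; rfl

lemma eq_zero_of_mass {v : E → ℝ} (h : ∀ i, 0 ≤ v i) (hm : mass v = 0) : v = 0 := by
  funext i
  exact (Finset.sum_eq_zero_iff_of_nonneg (fun i _ => h i)).1 hm i (Finset.mem_univ i)

lemma mass_smul_nrm {v : E → ℝ} (h : ∀ i, 0 ≤ v i) : mass v • (nrm v : E → ℝ) = v := by
  rcases (mass_nonneg h).eq_or_lt with h0 | h0
  · rw [← h0, zero_smul, eq_zero_of_mass h h0.symm]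
  · rw [nrm_val h h0, smul_smul, mul_inv_cancel₀ h0.ne', one_smul]

lemma nrm_coe (μ : ProbVec E) : nrm (μ : E → ℝ) = μ := by
  apply Subtype.ext
  have := mass_smul_nrm μ.2.1
  rwa [pv_mass, one_smul] at this

lemma nrm_smul {v : E → ℝ} (h : ∀ i, 0 ≤ v i) {a : ℝ} (ha : 0 < a) (hm : 0 < mass v) :
    nrm (a • v) = nrm v := by
  apply Subtype.ext
  have h' : ∀ i, 0 ≤ (a • v) i := fun i => mul_nonneg ha.le (h i)
  rw [nrm_val h hm, nrm_val h' (by rw [mass_smul]; positivity),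
    mass_smul, smul_smul]
  congr 1
  field_simp

def hat (f : ProbVec E → ℝ) (v : E → ℝ) : ℝ := mass v * f (nrm v)

lemma hat_zero (f : ProbVec E → ℝ) : hat f 0 = 0 := by simp [hat, mass]

lemma hat_coe (f : ProbVec E → ℝ) (μ : ProbVec E) : hat f (μ : E → ℝ) = f μ := by
  rw [hat, pv_mass, nrm_coe, one_mul]

lemma hat_smul (f : ProbVec E → ℝ) {v : E → ℝ} (h : ∀ i, 0 ≤ v i) {a : ℝ} (ha : 0 ≤ a) :
    hat f (a • v) = a * hat f v := by
  rcases ha.eq_or_lt with rfl | ha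
  · simp [hat_zero]
  rcases (mass_nonneg h).eq_or_lt with h0 | h0
  · rw [eq_zero_of_mass h h0.symm]; simp [hat_zero]
  · rw [hat, hat, nrm_smul h ha h0, mass_smul, mul_assoc]

end hat

section kernel
variable {E : Type*} [Fintype E] [Nonempty E] [DecidableEq E]
  {F : Type*} [Fintype F] [MeasurableSpace F] [MeasurableSingletonClass F]
  {M : F → E → E → ℝ}

lemma NN_Mm (hM : ∀ y i j, 0 ≤ M y i j) (y : F) : NN (Mm M y) := fun i j => hM y i j

lemma rowMul_eq (v : E → ℝ) (y : F) : rowMul M v y = Matrix.vecMul v (Mm M y) := by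
  funext j
  simp [rowMul, Matrix.vecMul, dotProduct, Mm, tsum_fintype]

lemma rowTot_eq (v : E → ℝ) : rowTot v = mass v := by
  simp [rowTot, mass, tsum_fintype]

lemma vecMul_nn {v : E → ℝ} (h : ∀ i, 0 ≤ v i) {A : Matrix E E ℝ} (hA : NN A) (j : E) :
    0 ≤ Matrix.vecMul v A j :=
  Finset.sum_nonneg fun i _ => mul_nonneg (h i) (hA i j)

lemma step_eq (hM : ∀ y i j, 0 ≤ M y i j) (μ : ProbVec E) (y : F)
    (hm : mass (Matrix.vecMul (μ : E → ℝ) (Mm M y)) ≠ 0) :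
    filterStep M μ y = nrm (Matrix.vecMul (μ : E → ℝ) (Mm M y)) := by
  set w := Matrix.vecMul (μ : E → ℝ) (Mm M y) with hw
  have hw0 : ∀ i, 0 ≤ w i := vecMul_nn μ.2.1 (NN_Mm hM y)
  have h : ∃ ν : ProbVec E, ∀ j,
      (ν : E → ℝ) j * rowTot (rowMul M (μ : E → ℝ) y) = rowMul M (μ : E → ℝ) y j := by
    refine ⟨nrm w, fun j => ?_⟩
    rw [rowMul_eq, rowTot_eq, ← hw]
    have := congrFun (mass_smul_nrm hw0) j
    rw [← this]; simp [mul_comm]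
  rw [filterStep, dif_pos h]
  have hs := h.choose_spec
  generalize h.choose = ν at hs ⊢
  apply Subtype.ext
  funext j
  have h1 := hs j
  rw [rowMul_eq, rowTot_eq, ← hw] at h1
  have h2 := congrFun (mass_smul_nrm hw0) j
  simp only [Pi.smul_apply, smul_eq_mul] at h2
  apply mul_right_cancel₀ hm
  rw [h1, ← h2, mul_comm]


lemma kernel_step (f : ProbVec E → ℝ) (μ : ProbVec E) :
    filterKernel M (Measure.count : Measure F) f μ
      = ∑ y, mass (Matrix.vecMul (μ : E → ℝ) (Mm M y)) * f (filterStep M μ y) := by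
  rw [filterKernel, integral_count]
  simp_rw [rowMul_eq, rowTot_eq, mul_comm]

lemma kernel_eq (hM : ∀ y i j, 0 ≤ M y i j) (f : ProbVec E → ℝ) (μ : ProbVec E) :
    filterKernel M (Measure.count : Measure F) f μ
      = ∑ y, hat f (Matrix.vecMul (μ : E → ℝ) (Mm M y)) := by
  rw [kernel_step]
  refine Finset.sum_congr rfl fun y _ => ?_
  by_cases hm : mass (Matrix.vecMul (μ : E → ℝ) (Mm M y)) = 0
  · simp [hat, hm]
  · rw [hat, step_eq hM μ y hm]

lemma hat_kernel (hM : ∀ y i j, 0 ≤ M y i j) (f : ProbVec E → ℝ) {v : E → ℝ}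
    (hv : ∀ i, 0 ≤ v i) :
    hat (filterKernel M (Measure.count : Measure F) f) v
      = ∑ y, hat f (Matrix.vecMul v (Mm M y)) := by
  conv_rhs => rw [← mass_smul_nrm hv]
  rw [hat, kernel_eq hM, Finset.mul_sum]
  refine Finset.sum_congr rfl fun y _ => ?_
  rw [Matrix.smul_vecMul, hat_smul f (vecMul_nn (nrm v).2.1 (NN_Mm hM y)) (mass_nonneg hv)]

/-- the defect functional -/
def hh (f : ProbVec E → ℝ) (A : Matrix E E ℝ) : ℝ :=
  ∑ i, hat f (A i) - hat f (fun j => ∑ i, A i j)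

lemma hh_kernel (hM : ∀ y i j, 0 ≤ M y i j) (f : ProbVec E → ℝ) {A : Matrix E E ℝ}
    (hA : NN A) :
    hh (filterKernel M (Measure.count : Measure F) f) A = ∑ y, hh f (A * Mm M y) := by
  have hs : ∀ j, 0 ≤ (fun j => ∑ i, A i j) j := fun j =>
    Finset.sum_nonneg fun i _ => hA i j
  simp only [hh]
  rw [hat_kernel hM f hs, Finset.sum_sub_distrib, Finset.sum_comm]
  congr 1
  · refine Finset.sum_congr rfl fun i _ => ?_
    rw [hat_kernel hM f (hA i)]
    rfl
  · refine Finset.sum_congr rfl fun y _ => ?_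
    congr 1
    funext j
    rw [colsum_mul]
    rfl

def QQ (C : ℝ) (f : ProbVec E → ℝ) : Prop :=
  ∀ A : Matrix E E ℝ, NN A → ∀ c, 0 ≤ c → OscLE A c → |hh f A| ≤ C * c * tm A

lemma tm_sum (hP : ∀ i, ∑ j, ∑ y, M y i j = 1) (A : Matrix E E ℝ) :
    ∑ y, tm (A * Mm M y) = tm A := by
  have : ∀ y, tm (A * Mm M y) = ∑ p, ∑ j, (∑ i, A i p) * M y p j := by
    intro y
    rw [tm]
    simp_rw [colsum_mul]
    rw [Finset.sum_comm]; rfl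
  simp_rw [this, ← Finset.mul_sum]
  rw [Finset.sum_comm]
  simp_rw [← Finset.mul_sum]
  rw [tm]
  refine Finset.sum_congr rfl fun p _ => ?_
  rw [Finset.sum_comm, hP, mul_one]

lemma QQ.kernel (hM : ∀ y i j, 0 ≤ M y i j) (hP : ∀ i, ∑ j, ∑ y, M y i j = 1) {C : ℝ}
    {f : ProbVec E → ℝ} (h : QQ C f) :
    QQ C (filterKernel M (Measure.count : Measure F) f) := by
  intro A hA c hc ho
  rw [hh_kernel hM f hA, ← tm_sum hP A, Finset.mul_sum]
  refine (Finset.abs_sum_le_sum_abs _ _).trans (Finset.sum_le_sum fun y _ => ?_)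
  exact h _ (hA.mul (NN_Mm hM y)) c hc (osc_mul' hA (NN_Mm hM y) hc ho)

lemma QQ.iter (hM : ∀ y i j, 0 ≤ M y i j) (hP : ∀ i, ∑ j, ∑ y, M y i j = 1) {C : ℝ}
    {f : ProbVec E → ℝ} (h : QQ C f) (n : ℕ) :
    QQ C ((filterKernel M (Measure.count : Measure F))^[n] f) := by
  induction n with
  | zero => exact h
  | succ n ih => rw [Function.iterate_succ_apply']; exact ih.kernel hM hP

lemma prodM_cons (y : F) (w : List F) : prodM M (y :: w) = Mm M y * prodM M w := by
  simp [prodM, Mm]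

lemma prodM_append (u w : List F) : prodM M (u ++ w) = prodM M u * prodM M w := by
  simp [prodM]

lemma NN_prodM (hM : ∀ y i j, 0 ≤ M y i j) (w : List F) : NN (prodM M w) := by
  induction w with
  | nil =>
    intro i j
    simp only [prodM, List.map_nil, List.prod_nil, Matrix.one_apply]
    split_ifs <;> norm_num
  | cons y w ih => rw [prodM_cons]; exact (NN_Mm hM y).mul ih

lemma QQ.word (hM : ∀ y i j, 0 ≤ M y i j) (hP : ∀ i, ∑ j, ∑ y, M y i j = 1) {C : ℝ}
    {f : ProbVec E → ℝ} (h : QQ C f) {κ : ℝ} (hκ : κ ≤ 1) (w : List F) :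
    ∀ A : Matrix E E ℝ, NN A → ∀ c, 0 ≤ c → OscLE A c →
      OscLE (A * prodM M w) (c * (1 - κ)) →
      |hh ((filterKernel M (Measure.count : Measure F))^[w.length] f) A|
        ≤ C * c * (tm A - κ * tm (A * prodM M w)) := by
  induction w with
  | nil =>
    intro A hA c hc ho ho2
    have e : A * prodM M ([] : List F) = A := by simp [prodM]
    rw [e] at ho2 ⊢
    have := h A hA _ (mul_nonneg hc (by linarith)) ho2
    simp only [List.length_nil, Function.iterate_zero, id_eq]
    linarith
  | cons y w ih =>
    intro A hA c hc ho ho2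
    rw [prodM_cons, ← mul_assoc] at ho2 ⊢
    rw [List.length_cons, Function.iterate_succ_apply', hh_kernel hM _ hA]
    have hb := ih _ (hA.mul (NN_Mm hM y)) c hc (osc_mul' hA (NN_Mm hM y) hc ho) ho2
    classical
    have ht := tm_sum hP A
    rw [← Finset.add_sum_erase _ _ (Finset.mem_univ y)] at ht ⊢
    have hr : |∑ z ∈ Finset.univ.erase y,
        hh ((filterKernel M (Measure.count : Measure F))^[w.length] f) (A * Mm M z)|
        ≤ C * c * ∑ z ∈ Finset.univ.erase y, tm (A * Mm M z) := by
      rw [Finset.mul_sum]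
      refine (Finset.abs_sum_le_sum_abs _ _).trans (Finset.sum_le_sum fun z _ => ?_)
      exact h.iter hM hP w.length _ (hA.mul (NN_Mm hM z)) c hc (osc_mul' hA (NN_Mm hM z) hc ho)
    refine (abs_add_le _ _).trans ((add_le_add hb hr).trans (le_of_eq ?_))
    rw [← ht]; ring

end kernel

section contr
variable {E : Type*} [Fintype E] [Nonempty E] [DecidableEq E]
  {F : Type*} [Fintype F] [MeasurableSpace F] [MeasurableSingletonClass F]
  {M : F → E → E → ℝ}

lemma mass_cs (A : Matrix E E ℝ) : mass (fun j => ∑ i, A i j) = ∑ i, mass (A i) := by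
  simp only [mass]; exact Finset.sum_comm

lemma QQ_lip {f : ProbVec E → ℝ} {L : ℝ} (hL : 0 ≤ L)
    (hf : ∀ μ ν : ProbVec E, |f μ - f ν| ≤ L * ∑ j, |(μ : E → ℝ) j - (ν : E → ℝ) j|) :
    QQ (L * Fintype.card E) f := by
  intro A hA c hc ho
  set s : E → ℝ := fun j => ∑ i, A i j with hs
  have hs0 : ∀ j, 0 ≤ s j := fun j => Finset.sum_nonneg fun i _ => hA i j
  have e1 : hh f A = ∑ i, mass (A i) * (f (nrm (A i)) - f (nrm s)) := by
    rw [hh, ← hs, hat, hs, mass_cs, ← hs, Finset.sum_mul, ← Finset.sum_sub_distrib]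
    refine Finset.sum_congr rfl fun i _ => ?_
    rw [hat]; ring
  have key : ∀ i j, |A i j - mass (A i) * (nrm s : E → ℝ) j| ≤ c * s j := by
    intro i j
    have hle : ∀ j, A i j ≤ s j := fun j => Finset.single_le_sum (f := fun p => A p j)
      (fun p _ => hA p j) (Finset.mem_univ i)
    rcases (mass_nonneg hs0).eq_or_lt with h0 | h0
    · have hz := eq_zero_of_mass hs0 h0.symm
      have hz' : ∀ j, A i j = 0 := fun j => le_antisymm (by
        have := hle j; rw [hz] at this; exact this) (hA i j)
      have : mass (A i) = 0 := by simp [mass, hz']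
      rw [this, hz' j]; simp only [zero_mul, sub_zero, abs_zero]
      exact mul_nonneg hc (hs0 j)
    · have h1 : (A i j - mass (A i) * (nrm s : E → ℝ) j) * mass s
          = ∑ k, (A i j * s k - A i k * s j) := by
        have h2 := congrFun (mass_smul_nrm hs0) j
        simp only [Pi.smul_apply, smul_eq_mul] at h2
        rw [Finset.sum_sub_distrib, ← Finset.mul_sum, ← Finset.sum_mul]
        change _ = A i j * mass s - mass (A i) * s j
        rw [← h2]; ring
      have h3 : |(A i j - mass (A i) * (nrm s : E → ℝ) j) * mass s| ≤ c * s j * mass s := by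
        rw [h1, mass, Finset.mul_sum]
        exact (Finset.abs_sum_le_sum_abs _ _).trans (Finset.sum_le_sum fun k _ => ho i j k)
      rw [abs_mul, abs_of_pos h0] at h3
      exact le_of_mul_le_mul_right h3 h0
  have e2 : ∀ i, |mass (A i) * (f (nrm (A i)) - f (nrm s))| ≤ L * c * mass s := by
    intro i
    have hm := mass_nonneg (hA i)
    rw [abs_mul, abs_of_nonneg hm]
    calc mass (A i) * |f (nrm (A i)) - f (nrm s)|
        ≤ mass (A i) * (L * ∑ j, |(nrm (A i) : E → ℝ) j - (nrm s : E → ℝ) j|) :=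
          mul_le_mul_of_nonneg_left (hf _ _) hm
      _ = L * ∑ j, |A i j - mass (A i) * (nrm s : E → ℝ) j| := by
          rw [mul_left_comm, Finset.mul_sum]
          congr 1
          refine Finset.sum_congr rfl fun j _ => ?_
          have h2 := congrFun (mass_smul_nrm (hA i)) j
          simp only [Pi.smul_apply, smul_eq_mul] at h2
          rw [← h2, ← mul_sub, abs_mul, abs_of_nonneg hm]
      _ ≤ L * ∑ j, c * s j := by
          gcongr with j _
          exact key i j
      _ = L * c * mass s := by rw [mass, ← Finset.mul_sum, mul_assoc]
  rw [e1]
  refine (Finset.abs_sum_le_sum_abs _ _).trans ((Finset.sum_le_sum fun i _ => e2 i).trans ?_)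
  rw [Finset.sum_const, Finset.card_univ, nsmul_eq_mul]
  have : tm A = mass s := rfl
  rw [this]
  apply le_of_eq; ring

lemma contraction (hM : ∀ y i j, 0 ≤ M y i j) (hP : ∀ i, ∑ j, ∑ y, M y i j = 1)
    (ys : List F)
    (hsub : ∀ i j k l : E, 0 < prodM M ys i j → 0 < prodM M ys k l →
        0 < prodM M ys i l ∧ 0 < prodM M ys k j)
    (hw : ∀ i : E, ∃ u : List F, 0 < ∑ j, prodM M (u ++ ys) i j) :
    ∃ m : ℕ, ∃ ε : ℝ, 0 < ε ∧ ∀ C, 0 ≤ C → ∀ f : ProbVec E → ℝ, QQ C f →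
      QQ (C * (1 - ε)) ((filterKernel M (Measure.count : Measure F))^[m] f) := by
  obtain ⟨κ, hκ0, hκ1, hκ⟩ := exists_kappa (NN_prodM hM ys) hsub
  choose u hu using hw
  set r : E → ℝ := fun i => ∑ j, prodM M (u i ++ ys) i j with hr
  set r0 := Finset.univ.inf' Finset.univ_nonempty r with hr0
  have hr0pos : 0 < r0 := by
    rw [hr0, Finset.lt_inf'_iff]; exact fun i _ => hu i
  have hcard : (0 : ℝ) < Fintype.card E := by exact_mod_cast Fintype.card_pos
  refine ⟨Finset.univ.sup fun i => (u i ++ ys).length, κ * r0 / Fintype.card E,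
    by positivity, fun C hC f hf A hA c hc ho => ?_⟩
  obtain ⟨i, -, hi⟩ := Finset.exists_max_image Finset.univ (fun j => ∑ p, A p j)
    Finset.univ_nonempty
  set m := Finset.univ.sup fun i => (u i ++ ys).length with hm
  have hle : (u i ++ ys).length ≤ m :=
    Finset.le_sup (f := fun i => (u i ++ ys).length) (Finset.mem_univ i)
  have hsplit : m = (u i ++ ys).length + (m - (u i ++ ys).length) := by omega
  rw [hsplit, Function.iterate_add_apply]
  have ho2 : OscLE (A * prodM M (u i ++ ys)) (c * (1 - κ)) := by
    rw [prodM_append, ← mul_assoc]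
    exact osc_mul (hA.mul (NN_prodM hM _)) hc (osc_mul' hA (NN_prodM hM _) hc ho) hκ
  refine ((hf.iter hM hP _).word hM hP hκ1 (u i ++ ys) A hA c hc ho ho2).trans ?_
  have h1 : tm A ≤ Fintype.card E * ∑ p, A p i := by
    rw [tm]
    refine (Finset.sum_le_sum fun j _ => hi j (Finset.mem_univ j)).trans ?_
    rw [Finset.sum_const, Finset.card_univ, nsmul_eq_mul]
  have hsi : 0 ≤ ∑ p, A p i := Finset.sum_nonneg fun p _ => hA p i
  have h2 : (∑ p, A p i) * r i ≤ tm (A * prodM M (u i ++ ys)) := by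
    rw [tm]
    simp_rw [colsum_mul]
    rw [Finset.sum_comm]
    simp_rw [← Finset.mul_sum]
    refine Finset.single_le_sum (f := fun q => (∑ p, A p q) * ∑ j, prodM M (u i ++ ys) q j)
      (fun q _ => mul_nonneg (Finset.sum_nonneg fun p _ => hA p q)
        (Finset.sum_nonneg fun j _ => NN_prodM hM _ q j)) (Finset.mem_univ i)
  have h3 : r0 ≤ r i := Finset.inf'_le r (Finset.mem_univ i)
  have h4 : r0 / Fintype.card E * tm A ≤ tm (A * prodM M (u i ++ ys)) := by
    calc r0 / Fintype.card E * tm A ≤ r0 / Fintype.card E * (Fintype.card E * ∑ p, A p i) :=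
          mul_le_mul_of_nonneg_left h1 (by positivity)
      _ = (∑ p, A p i) * r0 := by field_simp
      _ ≤ (∑ p, A p i) * r i := mul_le_mul_of_nonneg_left h3 hsi
      _ ≤ _ := h2
  have h5 : tm A - κ * tm (A * prodM M (u i ++ ys)) ≤ (1 - κ * r0 / Fintype.card E) * tm A := by
    have := mul_le_mul_of_nonneg_left h4 hκ0.le
    have e : κ * (r0 / Fintype.card E * tm A) = κ * r0 / Fintype.card E * tm A := by ring
    rw [e] at this
    linarith
  calc _ ≤ C * c * ((1 - κ * r0 / Fintype.card E) * tm A) :=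
        mul_le_mul_of_nonneg_left h5 (mul_nonneg hC hc)
    _ = _ := by ring

lemma QQ.mono {C C' : ℝ} (h : C ≤ C') {f : ProbVec E → ℝ} (hf : QQ C f) : QQ C' f := by
  intro A hA c hc ho
  refine (hf A hA c hc ho).trans ?_
  gcongr
  exact tm_nonneg hA

lemma small (hM : ∀ y i j, 0 ≤ M y i j) (hP : ∀ i, ∑ j, ∑ y, M y i j = 1)
    (ys : List F)
    (hsub : ∀ i j k l : E, 0 < prodM M ys i j → 0 < prodM M ys k l →
        0 < prodM M ys i l ∧ 0 < prodM M ys k j)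
    (hw : ∀ i : E, ∃ u : List F, 0 < ∑ j, prodM M (u ++ ys) i j)
    {C : ℝ} (hC : 0 ≤ C) {f : ProbVec E → ℝ} (hf : QQ C f) {η : ℝ} (hη : 0 < η) :
    ∃ n : ℕ, QQ η ((filterKernel M (Measure.count : Measure F))^[n] f) := by
  obtain ⟨m, ε, hε, h⟩ := contraction hM hP ys hsub hw
  set θ := max (1 - ε) 0 with hθ
  have hθ0 : 0 ≤ θ := le_max_right _ _
  have hθ1 : θ < 1 := max_lt (by linarith) one_pos
  have hk : ∀ k : ℕ, QQ (C * θ ^ k) ((filterKernel M (Measure.count : Measure F))^[m * k] f) := by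
    intro k
    induction k with
    | zero => simpa using hf
    | succ k ih =>
      have := h _ (by positivity) _ ih
      rw [← Function.iterate_add_apply] at this
      have e : m * (k + 1) = m + m * k := by ring
      rw [e]
      refine this.mono ?_
      rw [pow_succ, ← mul_assoc]
      exact mul_le_mul_of_nonneg_left (le_max_left _ _) (by positivity)
  have ht : Tendsto (fun k : ℕ => C * θ ^ k) atTop (𝓝 0) := by
    simpa using (tendsto_pow_atTop_nhds_zero_of_lt_one hθ0 hθ1).const_mul C
  obtain ⟨k, hk'⟩ := (ht.eventually (gt_mem_nhds hη)).exists
  exact ⟨m * k, (hk k).mono hk'.le⟩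

lemma QQ.approx {C : ℝ} {g : ProbVec E → ℝ} (h : QQ C g) (μ : ProbVec E) :
    |g μ - ∑ i, (μ : E → ℝ) i * g (dlt i)| ≤ C := by
  have hA : NN (Matrix.diagonal (μ : E → ℝ)) := by
    intro i j
    rw [Matrix.diagonal_apply]
    split_ifs
    · exact μ.2.1 i
    · exact le_rfl
  have h1 := h _ hA 1 zero_le_one (osc_one hA)
  have ec : (fun j => ∑ i, Matrix.diagonal (μ : E → ℝ) i j) = (μ : E → ℝ) := by
    funext j; simp [Matrix.diagonal_apply]
  have et : tm (Matrix.diagonal (μ : E → ℝ)) = 1 := by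
    have := pv_mass μ
    rw [← ec] at this
    exact this
  rw [et, hh, ec, hat_coe] at h1
  have er : ∀ i, hat g (Matrix.diagonal (μ : E → ℝ) i) = (μ : E → ℝ) i * g (dlt i) := by
    intro i
    have : Matrix.diagonal (μ : E → ℝ) i = (μ : E → ℝ) i • (dlt i : E → ℝ) := by
      funext j
      change _ = (μ : E → ℝ) i * (Pi.single i (1 : ℝ) : E → ℝ) j
      by_cases hij : i = j
      · subst hij; simp
      · simp [Matrix.diagonal_apply_ne _ hij, Pi.single_eq_of_ne (Ne.symm hij)]
    rw [this, hat_smul g (dlt i).2.1 (μ.2.1 i), hat_coe]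
  simp_rw [er] at h1
  rw [abs_sub_comm]
  linarith

lemma transMat_eq (i j : E) : transMat M (Measure.count : Measure F) i j = ∑ y, M y i j := by
  rw [transMat, integral_count]

lemma word_of_matPow (hM : ∀ y i j, 0 ≤ M y i j) (n : ℕ) : ∀ i r : E,
    0 < matPow (transMat M (Measure.count : Measure F)) n i r →
    ∃ u : List F, 0 < prodM M u i r := by
  induction n with
  | zero =>
    intro i r h
    simp only [matPow] at h
    have : i = r := by
      by_contra hne
      simp [hne] at h
    exact ⟨[], by simp [prodM, this]⟩
  | succ n ih =>
    intro i r h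
    simp only [matPow, tsum_fintype] at h
    obtain ⟨k, -, hk⟩ : ∃ k ∈ Finset.univ, 0 <
        matPow (transMat M (Measure.count : Measure F)) n i k * transMat M Measure.count k r := by
      by_contra hcon
      push Not at hcon
      exact absurd (Finset.sum_nonpos hcon) (not_le.2 h)
    have hp : 0 ≤ transMat M (Measure.count : Measure F) k r := by
      rw [transMat_eq]; exact Finset.sum_nonneg fun y _ => hM y k r
    have hp' : 0 < transMat M (Measure.count : Measure F) k r :=
      lt_of_le_of_ne hp (fun e => by simp [← e] at hk)
    obtain ⟨u, hu⟩ := ih i k (pos_of_mul_pos_left hk hp)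
    rw [transMat_eq] at hp'
    obtain ⟨y, -, hy⟩ : ∃ y ∈ Finset.univ, 0 < M y k r := by
      by_contra hcon
      push Not at hcon
      exact absurd (Finset.sum_nonpos hcon) (not_le.2 hp')
    refine ⟨u ++ [y], ?_⟩
    rw [prodM_append, Matrix.mul_apply]
    have e : prodM M [y] = Mm M y := by simp [prodM, Mm]
    rw [e]
    refine lt_of_lt_of_le (mul_pos hu hy) (Finset.single_le_sum
      (f := fun q => prodM M u i q * Mm M y q r)
      (fun q _ => mul_nonneg (NN_prodM hM u i q) (hM y q r)) (Finset.mem_univ k))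

end contr

section top
variable {E : Type*} [Fintype E] [Nonempty E] [DecidableEq E]
  {F : Type*} [Fintype F] [MeasurableSpace F] [MeasurableSingletonClass F]
  {M : F → E → E → ℝ}

lemma pv_compact : CompactSpace (ProbVec E) := by
  refine isCompact_iff_compactSpace (s := {p : E → ℝ | (∀ i, 0 ≤ p i) ∧ HasSum p 1}).1 ?_
  have : {p : E → ℝ | (∀ i, 0 ≤ p i) ∧ HasSum p 1} = stdSimplex ℝ E := by
    ext p
    constructor
    · rintro ⟨h0, h1⟩
      exact ⟨h0, (hasSum_fintype p).unique h1⟩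
    · rintro ⟨h0, h1⟩
      exact ⟨h0, by have := hasSum_fintype p; rwa [h1] at this⟩
  rw [this]
  exact isCompact_stdSimplex ℝ E

lemma pv_bdd {f : ProbVec E → ℝ} (hf : Continuous f) : ∃ C : ℝ, ∀ μ, |f μ| ≤ C := by
  haveI := pv_compact (E := E)
  obtain ⟨C, hC⟩ := (isCompact_univ (X := ProbVec E)).exists_bound_of_continuousOn hf.continuousOn
  exact ⟨C, fun μ => hC μ (Set.mem_univ _)⟩

lemma pv_integrable {f : ProbVec E → ℝ} (hf : Continuous f) (ν : Measure (ProbVec E))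
    [IsFiniteMeasure ν] : Integrable f ν := by
  obtain ⟨C, hC⟩ := pv_bdd hf
  exact Integrable.of_bound hf.aestronglyMeasurable C (Eventually.of_forall hC)

lemma hat_cont {f : ProbVec E → ℝ} (hf : Continuous f) {v : ProbVec E → E → ℝ}
    (hv : Continuous v) (hv0 : ∀ μ i, 0 ≤ v μ i) : Continuous fun μ => hat f (v μ) := by
  obtain ⟨C, hC⟩ := pv_bdd hf
  have hmc : Continuous fun μ => mass (v μ) := by
    unfold mass; fun_prop
  rw [continuous_iff_continuousAt]
  intro μ
  rcases (mass_nonneg (hv0 μ)).eq_or_lt with h0 | h0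
  · have hz : hat f (v μ) = 0 := by rw [hat, ← h0, zero_mul]
    rw [ContinuousAt, hz]
    refine squeeze_zero_norm (a := fun ν => mass (v ν) * C) (fun ν => ?_) ?_
    · rw [hat, Real.norm_eq_abs, abs_mul, abs_of_nonneg (mass_nonneg (hv0 ν))]
      exact mul_le_mul_of_nonneg_left (hC _) (mass_nonneg (hv0 ν))
    · have := (hmc.tendsto μ).mul_const C
      rwa [← h0, zero_mul] at this
  · have hn : ContinuousAt (fun ν => nrm (v ν)) μ := by
      refine (Topology.IsInducing.subtypeVal
        (t := {p : E → ℝ | (∀ i, 0 ≤ p i) ∧ HasSum p 1})).continuousAt_iff.2 ?_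
      have h1 : ContinuousAt (fun ν => (mass (v ν))⁻¹ • v ν) μ :=
        (hmc.continuousAt.inv₀ h0.ne').smul hv.continuousAt
      refine h1.congr ?_
      filter_upwards [hmc.continuousAt.eventually (lt_mem_nhds h0)] with ν hν
      exact (nrm_val (hv0 ν) hν).symm
    exact hmc.continuousAt.mul (hf.continuousAt.comp hn)

lemma kernel_cont (hM : ∀ y i j, 0 ≤ M y i j) {f : ProbVec E → ℝ} (hf : Continuous f) :
    Continuous (filterKernel M (Measure.count : Measure F) f) := by
  have : filterKernel M (Measure.count : Measure F) f =
      fun μ : ProbVec E => ∑ y, hat f (Matrix.vecMul (μ : E → ℝ) (Mm M y)) := by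
    funext μ; exact kernel_eq hM f μ
  rw [this]
  refine continuous_finset_sum _ fun y _ => hat_cont hf ?_ fun μ i =>
    vecMul_nn μ.2.1 (NN_Mm hM y) i
  exact continuous_subtype_val.matrix_vecMul continuous_const

lemma iter_cont (hM : ∀ y i j, 0 ≤ M y i j) {f : ProbVec E → ℝ} (hf : Continuous f) (n : ℕ) :
    Continuous ((filterKernel M (Measure.count : Measure F))^[n] f) := by
  induction n with
  | zero => exact hf
  | succ n ih => rw [Function.iterate_succ_apply']; exact kernel_cont hM ih

lemma inv_iter (hM : ∀ y i j, 0 ≤ M y i j) {ν : ProbabilityMeasure (ProbVec E)}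
    (hν : IsPiInvariant M (Measure.count : Measure F) ν)
    {f : ProbVec E → ℝ} (hf : Continuous f) (n : ℕ) :
    ∫ μ, ((filterKernel M (Measure.count : Measure F))^[n] f) μ ∂(ν : Measure (ProbVec E))
      = ∫ μ, f μ ∂(ν : Measure (ProbVec E)) := by
  induction n with
  | zero => rfl
  | succ n ih =>
    rw [Function.iterate_succ_apply', hν _ ⟨iter_cont hM hf n, pv_bdd (iter_cont hM hf n)⟩, ih]

lemma coord_cont (j : E) : Continuous fun μ : ProbVec E => (μ : E → ℝ) j :=
  (continuous_apply j).comp continuous_subtype_val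

lemma barycenter (hM : ∀ y i j, 0 ≤ M y i j) {lam : ProbVec E}
    (hlamUniq : ∀ ρ : ProbVec E,
      (∀ j, ∑' i, (ρ : E → ℝ) i * transMat M (Measure.count : Measure F) i j
        = (ρ : E → ℝ) j) → ρ = lam)
    {ν : ProbabilityMeasure (ProbVec E)}
    (hν : IsPiInvariant M (Measure.count : Measure F) ν) (j : E) :
    ∫ μ, (μ : E → ℝ) j ∂(ν : Measure (ProbVec E)) = (lam : E → ℝ) j := by
  set b : E → ℝ := fun j => ∫ μ, (μ : E → ℝ) j ∂(ν : Measure (ProbVec E)) with hb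
  have hb1 : mass b = 1 := by
    rw [mass, hb, ← integral_finsetSum _ fun j _ => pv_integrable (coord_cont j) _]
    have : ∀ μ : ProbVec E, ∑ i, (μ : E → ℝ) i = 1 := fun μ => pv_mass μ
    simp [this]
  have := hlamUniq (mkPV b (fun i => integral_nonneg fun μ => μ.2.1 i) hb1) (fun j => by
    change ∑' i, b i * _ = b j
    rw [tsum_fintype]
    have h1 := hν _ ⟨coord_cont j, pv_bdd (coord_cont j)⟩
    change _ = b j at h1
    rw [← h1]
    have h2 : ∀ μ : ProbVec E, filterKernel M (Measure.count : Measure F)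
        (fun μ : ProbVec E => (μ : E → ℝ) j) μ
        = ∑ i, (μ : E → ℝ) i * transMat M (Measure.count : Measure F) i j := by
      intro μ
      rw [kernel_eq hM]
      have h3 : ∀ y, hat (fun μ : ProbVec E => (μ : E → ℝ) j)
          (Matrix.vecMul (μ : E → ℝ) (Mm M y)) = ∑ i, (μ : E → ℝ) i * M y i j := by
        intro y
        exact congrFun (mass_smul_nrm (vecMul_nn μ.2.1 (NN_Mm hM y))) j
      simp_rw [h3, transMat_eq, Finset.mul_sum]
      exact Finset.sum_comm
    simp_rw [h2]
    rw [integral_finsetSum _ fun i _ => (pv_integrable (coord_cont i) _).mul_const _]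
    simp_rw [integral_mul_const]
    rfl)
  rw [← this]; rfl

lemma uniq (hM : ∀ y i j, 0 ≤ M y i j) (hP : ∀ i, ∑ j, ∑ y, M y i j = 1)
    (ys : List F)
    (hsub : ∀ i j k l : E, 0 < prodM M ys i j → 0 < prodM M ys k l →
        0 < prodM M ys i l ∧ 0 < prodM M ys k j)
    (hw : ∀ i : E, ∃ u : List F, 0 < ∑ j, prodM M (u ++ ys) i j) {lam : ProbVec E}
    (hlamUniq : ∀ ρ : ProbVec E,
      (∀ j, ∑' i, (ρ : E → ℝ) i * transMat M (Measure.count : Measure F) i j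
        = (ρ : E → ℝ) j) → ρ = lam)
    {ν ν' : ProbabilityMeasure (ProbVec E)}
    (hν : IsPiInvariant M (Measure.count : Measure F) ν)
    (hν' : IsPiInvariant M (Measure.count : Measure F) ν') : ν = ν' := by
  have ht : Tendsto (fun _ : ℕ => ν) atTop (𝓝 ν') := by
    rw [tendsto_iff_forall_lipschitz_integral_tendsto]
    rintro f - ⟨L, hL⟩
    have hfc := hL.continuous
    have hQ : QQ (L * Fintype.card E) f := by
      refine QQ_lip L.2 fun μ μ' => ?_
      have h1 := hL.dist_le_mul μ μ'
      rw [Real.dist_eq] at h1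
      refine h1.trans (mul_le_mul_of_nonneg_left ?_ L.2)
      rw [Subtype.dist_eq, dist_pi_le_iff (Finset.sum_nonneg fun _ _ => abs_nonneg _)]
      intro j
      rw [Real.dist_eq]
      exact Finset.single_le_sum (f := fun j => |(μ : E → ℝ) j - (μ' : E → ℝ) j|)
        (fun _ _ => abs_nonneg _) (Finset.mem_univ j)
    have key : ∀ ρ : ProbabilityMeasure (ProbVec E),
        IsPiInvariant M (Measure.count : Measure F) ρ → ∀ n η,
        QQ η ((filterKernel M (Measure.count : Measure F))^[n] f) →
        |∫ μ, f μ ∂(ρ : Measure (ProbVec E)) -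
          ∑ i, (lam : E → ℝ) i * ((filterKernel M (Measure.count : Measure F))^[n] f) (dlt i)|
          ≤ η := by
      intro ρ hρ n η hη
      rw [← inv_iter hM hρ hfc n]
      have hgc := iter_cont hM hfc n (M := M)
      set g := (filterKernel M (Measure.count : Measure F))^[n] f
      have e : ∑ i, (lam : E → ℝ) i * g (dlt i)
          = ∫ μ, ∑ i, (μ : E → ℝ) i * g (dlt i) ∂(ρ : Measure (ProbVec E)) := by
        rw [integral_finsetSum _ fun i _ => (pv_integrable (coord_cont i) _).mul_const _]
        simp_rw [integral_mul_const, barycenter hM hlamUniq hρ]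
      rw [e, ← integral_sub (pv_integrable hgc _) (integrable_finsetSum _ fun i _ =>
        (pv_integrable (coord_cont i) _).mul_const _)]
      have := norm_integral_le_of_norm_le_const (μ := (ρ : Measure (ProbVec E)))
        (f := fun μ : ProbVec E => g μ - ∑ i, (μ : E → ℝ) i * g (dlt i)) (C := η)
        (Eventually.of_forall fun μ => hη.approx μ)
      simpa using this
    have heq : ∫ μ, f μ ∂(ν : Measure (ProbVec E)) = ∫ μ, f μ ∂(ν' : Measure (ProbVec E)) := by
      apply eq_of_abs_sub_le_all
      intro η hη
      obtain ⟨n, hn⟩ := small hM hP ys hsub hw (by positivity) hQ (half_pos hη)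
      have h1 := abs_le.1 (key ν hν n _ hn)
      have h2 := abs_le.1 (key ν' hν' n _ hn)
      rw [abs_le]; constructor <;> linarith
    rw [heq]
    exact tendsto_const_nhds
  exact tendsto_nhds_unique tendsto_const_nhds ht

lemma convex_comb {ι : Type*} [Fintype ι] (w : ι → ℝ) (hw : ∀ i, 0 ≤ w i) (hw1 : ∑ i, w i = 1)
    (ν : ι → ProbabilityMeasure (ProbVec E)) : ∃ ρ : ProbabilityMeasure (ProbVec E),
      ∀ f : ProbVec E → ℝ, Continuous f → ∫ μ, f μ ∂(ρ : Measure (ProbVec E))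
        = ∑ i, w i * ∫ μ, f μ ∂(ν i : Measure (ProbVec E)) := by
  refine ⟨⟨∑ i, ENNReal.ofReal (w i) • (ν i : Measure (ProbVec E)), ⟨?_⟩⟩, fun f hf => ?_⟩
  · simp only [Measure.coe_finsetSum, Measure.coe_smul, Finset.sum_apply, Pi.smul_apply,
      measure_univ, smul_eq_mul, mul_one]
    rw [← ENNReal.ofReal_sum_of_nonneg fun i _ => hw i, hw1, ENNReal.ofReal_one]
  · change ∫ μ, f μ ∂(∑ i, ENNReal.ofReal (w i) • (ν i : Measure (ProbVec E))) = _
    rw [integral_finsetSum_measure fun i _ =>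
      (pv_integrable hf _).smul_measure ENNReal.ofReal_ne_top]
    refine Finset.sum_congr rfl fun i _ => ?_
    rw [integral_smul_measure, ENNReal.toReal_ofReal (hw i), smul_eq_mul]

lemma iter_meas (hM : ∀ y i j, 0 ≤ M y i j) (hP : ∀ i, ∑ j, ∑ y, M y i j = 1) (n : ℕ) :
    ∀ x : ProbVec E, ∃ ρ : ProbabilityMeasure (ProbVec E),
      ∀ f : ProbVec E → ℝ, Continuous f → ∫ μ, f μ ∂(ρ : Measure (ProbVec E))
        = ((filterKernel M (Measure.count : Measure F))^[n] f) x := by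
  induction n with
  | zero =>
    intro x
    refine ⟨⟨Measure.dirac x, inferInstance⟩, fun f hf => ?_⟩
    change ∫ μ, f μ ∂(Measure.dirac x) = f x
    rw [integral_dirac' _ _ hf.stronglyMeasurable]
  | succ n ih =>
    intro x
    choose ρ hρ using ih
    obtain ⟨σ, hσ⟩ := convex_comb (fun y => mass (Matrix.vecMul (x : E → ℝ) (Mm M y)))
      (fun y => mass_nonneg (vecMul_nn x.2.1 (NN_Mm hM y))) (by
        have h := kernel_step (M := M) (fun _ => (1 : ℝ)) x
        simp only [mul_one] at h
        simp only [mass, Matrix.vecMul, dotProduct, Mm, Matrix.of_apply]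
        have e : ∑ y : F, ∑ j, ∑ i, (x : E → ℝ) i * M y i j
            = ∑ i, (x : E → ℝ) i * ∑ j, ∑ y, M y i j := by
          simp_rw [Finset.mul_sum]
          rw [Finset.sum_comm]
          rw [Finset.sum_congr rfl fun j _ => Finset.sum_comm, Finset.sum_comm]
        rw [e]
        simp_rw [hP, mul_one]
        exact pv_mass x)
      (fun y => ρ (filterStep M x y))
    refine ⟨σ, fun f hf => ?_⟩
    rw [hσ f hf, Function.iterate_succ_apply', kernel_step]
    refine Finset.sum_congr rfl fun y _ => ?_
    rw [hρ _ f hf]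

lemma exist (hM : ∀ y i j, 0 ≤ M y i j) (hP : ∀ i, ∑ j, ∑ y, M y i j = 1) :
    ∃ ρ : ProbabilityMeasure (ProbVec E), IsPiInvariant M (Measure.count : Measure F) ρ := by
  haveI := pv_compact (E := E)
  set x : ProbVec E := dlt (Classical.arbitrary E)
  choose ρ hρ using fun n => iter_meas hM hP n x
  have hces : ∀ n : ℕ, ∃ σ : ProbabilityMeasure (ProbVec E), ∀ f : ProbVec E → ℝ,
      Continuous f → ∫ μ, f μ ∂(σ : Measure (ProbVec E))
        = ∑ k : Fin (n + 1), (1 / ((n : ℝ) + 1)) *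
          ((filterKernel M (Measure.count : Measure F))^[(k : ℕ)] f) x := by
    intro n
    obtain ⟨σ, hσ⟩ := convex_comb (fun _ : Fin (n + 1) => 1 / ((n : ℝ) + 1))
      (fun _ => by positivity) (by simp; field_simp) (fun k => ρ k)
    exact ⟨σ, fun f hf => by rw [hσ f hf]; simp_rw [hρ _ f hf]⟩
  choose σ hσ using hces
  set U : Ultrafilter (ProbabilityMeasure (ProbVec E)) := (hyperfilter ℕ).map σ
  have hlim : Tendsto σ (hyperfilter ℕ : Filter ℕ) (𝓝 U.lim) := U.le_nhds_lim
  refine ⟨U.lim, fun f hf => ?_⟩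
  obtain ⟨hfc, C, hC⟩ := hf
  have hgc := kernel_cont hM hfc (M := M)
  rw [ProbabilityMeasure.tendsto_iff_forall_integral_tendsto] at hlim
  have l1 := hlim (BoundedContinuousFunction.mkOfCompact ⟨f, hfc⟩)
  have l2 := hlim (BoundedContinuousFunction.mkOfCompact ⟨_, hgc⟩)
  have l3 := l2.sub l1
  simp only [BoundedContinuousFunction.mkOfCompact_apply, ContinuousMap.coe_mk] at l3
  have hb : ∀ n : ℕ, |((filterKernel M (Measure.count : Measure F))^[n] f) x| ≤ C := by
    intro n
    rw [← hρ n f hfc]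
    have := norm_integral_le_of_norm_le_const (μ := (ρ n : Measure (ProbVec E)))
      (f := f) (C := C) (Eventually.of_forall hC)
    simpa using this
  have l4 : Tendsto (fun n => ∫ μ, filterKernel M (Measure.count : Measure F) f μ
      ∂(σ n : Measure (ProbVec E)) - ∫ μ, f μ ∂(σ n : Measure (ProbVec E))) atTop (𝓝 0) := by
    refine squeeze_zero_norm (a := fun n : ℕ => (2 * C) * (1 / ((n : ℝ) + 1))) (fun n => ?_) ?_
    · rw [hσ n _ hgc, hσ n f hfc, ← Finset.mul_sum, ← Finset.mul_sum, ← mul_sub]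
      have e1 := Fin.sum_univ_eq_sum_range
        (fun k => ((filterKernel M (Measure.count : Measure F))^[k] f) x) (n + 1)
      have e2 := Fin.sum_univ_eq_sum_range
        (fun k => ((filterKernel M (Measure.count : Measure F))^[k + 1] f) x) (n + 1)
      simp only [Function.iterate_succ_apply] at e2
      rw [e1, e2, ← Finset.sum_sub_distrib]
      have e3 := Finset.sum_range_sub
        (fun k => ((filterKernel M (Measure.count : Measure F))^[k] f) x) (n + 1)
      simp only [Function.iterate_succ_apply] at e3
      rw [e3, Real.norm_eq_abs, abs_mul, abs_of_nonneg (by positivity), mul_comm]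
      refine mul_le_mul_of_nonneg_right ?_ (by positivity)
      have h1 := abs_le.1 (hb (n + 1))
      have h2 := abs_le.1 (hb 0)
      simp only [Function.iterate_succ_apply, Function.iterate_zero, id_eq] at h1 h2 ⊢
      rw [abs_le]; constructor <;> linarith
    · simpa using (tendsto_one_div_add_atTop_nhds_zero_nat (𝕜 := ℝ)).const_mul (2 * C)
  have := tendsto_nhds_unique l3 (l4.mono_left Nat.hyperfilter_le_atTop)
  linarith

end top

end

end Kai

/-- Kaijser's theorem: if `E` and `F` are finite, `φ` is counting measure, the signal
transition matrix is aperiodic, and some finite product `M(y₁)⋯M(yₙ)` is nonzero and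
subrectangular, then the filter transition kernel `Π` admits a unique invariant
probability measure. -/
theorem unique_invariant_measure_of_subrectangular
    {E : Type*} [Fintype E] [Nonempty E] [DecidableEq E]
    {F : Type*} [Fintype F] [MeasurableSpace F] [MeasurableSingletonClass F]
    (M : F → E → E → ℝ)
    (hMnn : ∀ y i j, 0 ≤ M y i j)
    (hPtrans : ∀ i, HasSum (fun j => transMat M (Measure.count : Measure F) i j) 1)
    (hPirr : ∀ i j : E, ∃ n : ℕ,
      0 < matPow (transMat M (Measure.count : Measure F)) n i j)
    (lam : ProbVec E)
    (hlamInv : ∀ j, ∑' i,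
      (lam : E → ℝ) i * transMat M (Measure.count : Measure F) i j = (lam : E → ℝ) j)
    (hlamUniq : ∀ ρ : ProbVec E,
      (∀ j, ∑' i, (ρ : E → ℝ) i * transMat M (Measure.count : Measure F) i j
        = (ρ : E → ℝ) j) → ρ = lam)
    (hAper : ∀ i : E, ∃ N : ℕ, ∀ n ≥ N,
      0 < matPow (transMat M (Measure.count : Measure F)) n i i)
    (hsub : ∃ ys : List F, ys ≠ [] ∧ prodM M ys ≠ 0 ∧
      ∀ i j k l : E, 0 < prodM M ys i j → 0 < prodM M ys k l →
        0 < prodM M ys i l ∧ 0 < prodM M ys k j) :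
    ∃! 𝕄 : ProbabilityMeasure (ProbVec E), IsPiInvariant M (Measure.count : Measure F) 𝕄 := by
  have hP : ∀ i, ∑ j, ∑ y, M y i j = 1 := by
    intro i
    have h := (hasSum_fintype _).unique (hPtrans i)
    simp_rw [Kai.transMat_eq] at h
    exact h
  obtain ⟨ys, -, hne, hs⟩ := hsub
  have hw : ∀ i : E, ∃ u : List F, 0 < ∑ j, prodM M (u ++ ys) i j := by
    intro i
    have hex : ∃ r l, 0 < prodM M ys r l := by
      by_contra hcon
      push Not at hcon
      apply hne
      ext r l
      exact le_antisymm (hcon r l) (Kai.NN_prodM hMnn ys r l)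
    obtain ⟨r, l, hrl⟩ := hex
    obtain ⟨n, hn⟩ := hPirr i r
    obtain ⟨u, hu⟩ := Kai.word_of_matPow hMnn n i r hn
    refine ⟨u, ?_⟩
    refine lt_of_lt_of_le (mul_pos hu hrl) ?_
    rw [Kai.prodM_append]
    refine le_trans ?_ (Finset.single_le_sum (f := fun j => (prodM M u * prodM M ys) i j)
      (fun j _ => (Kai.NN_prodM hMnn u).mul (Kai.NN_prodM hMnn ys) i j) (Finset.mem_univ l))
    simp only [Matrix.mul_apply]
    exact Finset.single_le_sum (f := fun q => prodM M u i q * prodM M ys q l)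
      (fun q _ => mul_nonneg (Kai.NN_prodM hMnn u i q) (Kai.NN_prodM hMnn ys q l))
      (Finset.mem_univ r)
  obtain ⟨ρ, hρ⟩ := Kai.exist hMnn hP
  exact ⟨ρ, hρ, fun ρ' hρ' => Kai.uniq hMnn hP ys hs hw hlamUniq hρ' hρ⟩
end

section
/- Let S be a standard Borel space and κ a Markov kernel from S to S that admits a unique κ-invariant probability measure π (i.e. π is the only probability measure satisfying ∫ κ(x, A) π(dx) = π(A) for all measurable A). Let P_π be the law on S^ℕ of the Markov chain with initial distribution π and transition kernel κ (the Ionescu–Tulcea trajectory measure). Then P_π is invariant under the left shift θ : S^ℕ → S^ℕ, (θ x)(n) = x(n+1), and θ is ergodic with respect to P_π. -/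
open MeasureTheory Filter Topology ProbabilityTheory

namespace ShiftErg

variable {S : Type*} [MeasurableSpace S]

def rr (n : ℕ) : (ℕ → S) → (Fin (n + 1) → S) := fun x k => x k

theorem measurable_rr (n : ℕ) : Measurable (rr n : (ℕ → S) → (Fin (n + 1) → S)) := by
  unfold rr; fun_prop

def Step (κ : Kernel S S) (P : Measure (ℕ → S)) : Prop :=
  ∀ (n : ℕ) (A : Set S), MeasurableSet A → ∀ s : Set (Fin (n + 1) → S), MeasurableSet s →
    P (rr n ⁻¹' s ∩ {x : ℕ → S | x (n + 1) ∈ A}) = ∫⁻ x in rr n ⁻¹' s, κ (x n) A ∂P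

def sh (m : ℕ) : (ℕ → S) → (ℕ → S) := fun x k => x (k + m)

theorem measurable_sh (m : ℕ) : Measurable (sh m : (ℕ → S) → (ℕ → S)) := by
  unfold sh; fun_prop

theorem meas_kern (κ : Kernel S S) (n : ℕ) {A : Set S} (hA : MeasurableSet A) :
    Measurable (fun x : ℕ → S => κ (x n) A) :=
  (κ.measurable_coe hA).comp (measurable_pi_apply n)

theorem cyl_exists {C : Set (ℕ → S)} (hC : C ∈ measurableCylinders (fun _ : ℕ => S)) :
    ∃ (m : ℕ) (s : Set (Fin (m + 1) → S)), MeasurableSet s ∧ C = rr m ⁻¹' s := by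
  obtain ⟨J, t, ht, rfl⟩ := (mem_measurableCylinders C).1 hC
  have hb : ∀ i ∈ J, i < J.sup id + 1 := fun i hi =>
    Nat.lt_succ_of_le (Finset.le_sup (f := id) hi)
  refine ⟨J.sup id, (fun (y : Fin (J.sup id + 1) → S) (i : J) => y ⟨i.1, hb i.1 i.2⟩) ⁻¹' t, ?_, ?_⟩
  · exact (by fun_prop : Measurable
      (fun (y : Fin (J.sup id + 1) → S) (i : J) => y ⟨i.1, hb i.1 i.2⟩)) ht
  · rfl

theorem map_rr_eq (κ : Kernel S S) (P Q : Measure (ℕ → S)) [IsProbabilityMeasure P]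
    [IsProbabilityMeasure Q] (h0 : P.map (fun x => x 0) = Q.map (fun x => x 0))
    (hP : Step κ P) (hQ : Step κ Q) (n : ℕ) : P.map (rr n) = Q.map (rr n) := by
  induction n with
  | zero =>
    have : (rr 0 : (ℕ → S) → _) = (fun a (_ : Fin 1) => a) ∘ (fun x => x 0) := by
      funext x k
      have : k.1 = 0 := by have := k.2; omega
      simp [rr, this]
    rw [this, ← Measure.map_map (by fun_prop) (by fun_prop), h0,
      Measure.map_map (by fun_prop) (by fun_prop)]
  | succ n ih =>
    let g : (Fin (n + 1) → S) × S → (Fin (n + 1 + 1) → S) :=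
      fun p k => if h : k.1 < n + 1 then p.1 ⟨k.1, h⟩ else p.2
    have hg : Measurable g := by
      refine measurable_pi_iff.2 fun k => ?_
      by_cases h : k.1 < n + 1
      · simp only [g, h, dif_pos]; fun_prop
      · simp only [g, h, dif_neg, not_false_eq_true]; fun_prop
    have hr := measurable_rr (S := S) n
    have hpm : Measurable (fun x : ℕ → S => (rr n x, x (n + 1))) := by fun_prop
    have hcomp : (rr (n + 1) : (ℕ → S) → _) = g ∘ (fun x => (rr n x, x (n + 1))) := by
      funext x k
      by_cases h : k.1 < n + 1
      · simp only [g, rr, Function.comp, h, dif_pos]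
      · have : k.1 = n + 1 := by have := k.2; omega
        simp [g, rr, this]
    have hpair : P.map (fun x : ℕ → S => (rr n x, x (n + 1))) =
        Q.map (fun x : ℕ → S => (rr n x, x (n + 1))) := by
      have : IsProbabilityMeasure (P.map (fun x : ℕ → S => (rr n x, x (n + 1)))) :=
        Measure.isProbabilityMeasure_map hpm.aemeasurable
      apply Measure.ext_prod
      intro s t hs ht
      have key : ∀ R : Measure (ℕ → S), Step κ R →
          R.map (fun x : ℕ → S => (rr n x, x (n + 1))) (s ×ˢ t) =
            ∫⁻ y in s, κ (y (Fin.last n)) t ∂(R.map (rr n)) := by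
        intro R hR
        rw [Measure.map_apply hpm (hs.prod ht),
          setLIntegral_map (f := fun y : Fin (n + 1) → S => κ (y (Fin.last n)) t) hs
            ((κ.measurable_coe ht).comp (measurable_pi_apply _)) hr]
        have := hR n t ht s hs
        exact this
      rw [key P hP, key Q hQ, ih]
    rw [hcomp, ← Measure.map_map hg hpm, hpair, Measure.map_map hg hpm]

theorem law_unique (κ : Kernel S S) (P Q : Measure (ℕ → S)) [IsProbabilityMeasure P]
    [IsProbabilityMeasure Q] (h0 : P.map (fun x => x 0) = Q.map (fun x => x 0))
    (hP : Step κ P) (hQ : Step κ Q) : P = Q := by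
  refine ext_of_generate_finite (measurableCylinders (fun _ : ℕ => S))
    generateFrom_measurableCylinders.symm isPiSystem_measurableCylinders ?_ (by simp)
  intro C hC
  obtain ⟨m, s, hs, rfl⟩ := cyl_exists hC
  rw [← Measure.map_apply (measurable_rr m) hs, ← Measure.map_apply (measurable_rr m) hs,
    map_rr_eq κ P Q h0 hP hQ m]

/-- one-step law -/
theorem law_one (κ : Kernel S S) (P : Measure (ℕ → S)) (hP : Step κ P) :
    P.map (fun x => x 1) = (P.map (fun x => x 0)).bind (fun a => κ a) := by
  ext A hA
  rw [Measure.map_apply (by fun_prop) hA, Measure.bind_apply hA κ.measurable.aemeasurable,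
    lintegral_map (κ.measurable_coe hA) (by fun_prop)]
  have := hP 0 A hA Set.univ MeasurableSet.univ
  simp only [Set.preimage_univ, Set.univ_inter, Measure.restrict_univ] at this
  exact this

theorem sh_rr_preimage (m n : ℕ) {s : Set (Fin (n + 1) → S)} (hs : MeasurableSet s) :
    ∃ s' : Set (Fin (n + m + 1) → S), MeasurableSet s' ∧ sh m ⁻¹' (rr n ⁻¹' s) = rr (n + m) ⁻¹' s' := by
  refine ⟨(fun (y : Fin (n + m + 1) → S) (i : Fin (n + 1)) => y ⟨i.1 + m, by omega⟩) ⁻¹' s, ?_, rfl⟩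
  exact (by fun_prop : Measurable
    (fun (y : Fin (n + m + 1) → S) (i : Fin (n + 1)) => y ⟨i.1 + m, by omega⟩)) hs

theorem rr_mono (m n : ℕ) {s : Set (Fin (m + 1) → S)} (hs : MeasurableSet s) :
    ∃ s' : Set (Fin (n + m + 1) → S), MeasurableSet s' ∧ rr m ⁻¹' s = rr (n + m) ⁻¹' s' := by
  refine ⟨(fun (y : Fin (n + m + 1) → S) (i : Fin (m + 1)) => y ⟨i.1, by omega⟩) ⁻¹' s, ?_, rfl⟩
  exact (by fun_prop : Measurable
    (fun (y : Fin (n + m + 1) → S) (i : Fin (m + 1)) => y ⟨i.1, by omega⟩)) hs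

theorem step_map_sh (κ : Kernel S S) (P : Measure (ℕ → S)) (hP : Step κ P) :
    Step κ (P.map (sh 1)) := by
  intro n A hA s hs
  have hm : MeasurableSet {x : ℕ → S | x (n + 1) ∈ A} := measurable_pi_apply (n + 1) hA
  rw [Measure.map_apply (measurable_sh 1) ((measurable_rr n hs).inter hm),
    setLIntegral_map (measurable_rr n hs) (meas_kern κ n hA) (measurable_sh 1), Set.preimage_inter]
  obtain ⟨s', hs', h⟩ := sh_rr_preimage 1 n hs
  rw [h]
  exact hP (n + 1) A hA s' hs'

theorem mp_sh (P : Measure (ℕ → S)) (h : MeasurePreserving (sh 1) P P) (m : ℕ) :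
    MeasurePreserving (sh m) P P := by
  induction m with
  | zero => exact MeasurePreserving.id P
  | succ m ih =>
    have : (sh (m + 1) : (ℕ → S) → _) = sh m ∘ sh 1 := by
      funext x k; simp [sh, Nat.add_assoc]
    rw [this]; exact ih.comp h

theorem inv_sh {I : Set (ℕ → S)} (h : sh 1 ⁻¹' I = I) (m : ℕ) : sh m ⁻¹' I = I := by
  induction m with
  | zero => rfl
  | succ m ih =>
    have : (sh (m + 1) : (ℕ → S) → _) = sh m ∘ sh 1 := by
      funext x k; simp [sh, Nat.add_assoc]
    rw [this, Set.preimage_comp, ih, h]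

theorem lint_le (P : Measure (ℕ → S)) (U V W : Set (ℕ → S)) (f : (ℕ → S) → ENNReal)
    (hf : ∀ x, f x ≤ 1) (h : U ⊆ V ∪ W) : ∫⁻ x in U, f x ∂P ≤ ∫⁻ x in V, f x ∂P + P W := by
  calc ∫⁻ x in U, f x ∂P ≤ ∫⁻ x in V ∪ W, f x ∂P := lintegral_mono_set h
    _ ≤ ∫⁻ x in V, f x ∂P + ∫⁻ x in W, f x ∂P := lintegral_union_le _ _ _
    _ ≤ ∫⁻ x in V, f x ∂P + ∫⁻ x in W, 1 ∂P := by gcongr; exact hf _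
    _ = _ := by simp

theorem meas_le (P : Measure (ℕ → S)) (U V W : Set (ℕ → S)) 
    (h : U ⊆ V ∪ W) : P U ≤ P V + P W := (measure_mono h).trans (measure_union_le _ _)

theorem eps_aux {u v a d : ENNReal} {ε : NNReal} (hd : d ≤ (ε / 2 : NNReal)) (h1 : u ≤ a + d)
    (h2 : a ≤ v + d) : u ≤ v + ε := by
  calc u ≤ a + d := h1
    _ ≤ (v + d) + d := by gcongr
    _ ≤ (v + (ε / 2 : NNReal)) + (ε / 2 : NNReal) := by gcongr
    _ = _ := by rw [add_assoc, ← ENNReal.coe_add, add_halves]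

theorem step_inv (κ : Kernel S S) [IsMarkovKernel κ] (P : Measure (ℕ → S)) [IsProbabilityMeasure P]
    (hP : Step κ P) (hsh : MeasurePreserving (sh 1) P P) {I : Set (ℕ → S)} (hI : MeasurableSet I)
    (hinv : sh 1 ⁻¹' I = I) (n : ℕ) (A : Set S) (hA : MeasurableSet A)
    (s : Set (Fin (n + 1) → S)) (hs : MeasurableSet s) :
    P (I ∩ (rr n ⁻¹' s ∩ {x : ℕ → S | x (n + 1) ∈ A})) =
      ∫⁻ x in I ∩ rr n ⁻¹' s, κ (x n) A ∂P := by
  have hm : MeasurableSet {x : ℕ → S | x (n + 1) ∈ A} := measurable_pi_apply (n + 1) hA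
  have approx : ∀ ε : NNReal, 0 < ε → ∃ a b : ENNReal, ∃ d : ENNReal, d ≤ ε ∧
      P (I ∩ (rr n ⁻¹' s ∩ {x : ℕ → S | x (n + 1) ∈ A})) ≤ a + d ∧
      a ≤ P (I ∩ (rr n ⁻¹' s ∩ {x : ℕ → S | x (n + 1) ∈ A})) + d ∧
      ∫⁻ x in I ∩ rr n ⁻¹' s, κ (x n) A ∂P ≤ b + d ∧
      b ≤ ∫⁻ x in I ∩ rr n ⁻¹' s, κ (x n) A ∂P + d ∧ a = b := by
    intro ε hε
    obtain ⟨C, hC, hlt⟩ := (Measure.MeasureDense.of_generateFrom_isSetAlgebra_finite (μ := P)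
      (isSetAlgebra_measurableCylinders (α := fun _ : ℕ => S))
      generateFrom_measurableCylinders.symm).approx I hI (measure_ne_top _ _) ε
      (by exact_mod_cast hε)
    obtain ⟨m, t, ht, rfl⟩ := cyl_exists hC
    have hmp := mp_sh P hsh m
    have e1 : P (I ∩ (rr n ⁻¹' s ∩ {x : ℕ → S | x (n + 1) ∈ A})) =
        P (I ∩ (sh m ⁻¹' (rr n ⁻¹' s) ∩ {x : ℕ → S | x (n + m + 1) ∈ A})) := by
      rw [← hmp.measure_preimage (hI.inter ((measurable_rr n hs).inter hm)).nullMeasurableSet,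
        Set.preimage_inter, inv_sh hinv, Set.preimage_inter]
      congr 3
      ext x
      simp [sh, Nat.add_right_comm]
    have e2 : ∫⁻ x in I ∩ rr n ⁻¹' s, κ (x n) A ∂P =
        ∫⁻ x in I ∩ sh m ⁻¹' (rr n ⁻¹' s), κ (x (n + m)) A ∂P := by
      rw [← hmp.setLIntegral_comp_preimage (hI.inter (measurable_rr n hs)) (meas_kern κ n hA),
        Set.preimage_inter, inv_sh hinv]
      rfl
    obtain ⟨s', hs', hs'e⟩ := sh_rr_preimage m n hs
    obtain ⟨t', ht', ht'e⟩ := rr_mono m n ht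
    have hstep := hP (n + m) A hA (t' ∩ s') (ht'.inter hs')
    rw [Set.preimage_inter, ← ht'e, ← hs'e, Set.inter_assoc] at hstep
    have hk1 : ∀ x : ℕ → S, κ (x (n + m)) A ≤ 1 := fun x => prob_le_one
    refine ⟨_, _, P (symmDiff I (rr m ⁻¹' t)), ?_, ?_, ?_, ?_, ?_, hstep⟩
    · rw [ENNReal.ofReal_coe_nnreal] at hlt; exact hlt.le
    · rw [e1]; apply meas_le; intro x hx
      by_cases h : x ∈ rr m ⁻¹' t
      · exact Or.inl ⟨h, hx.2⟩
      · exact Or.inr (Or.inl ⟨hx.1, h⟩)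
    · rw [e1]; apply meas_le; intro x hx
      by_cases h : x ∈ I
      · exact Or.inl ⟨h, hx.2⟩
      · exact Or.inr (Or.inr ⟨hx.1, h⟩)
    · rw [e2]; refine lint_le _ _ _ _ _ hk1 ?_; intro x hx
      by_cases h : x ∈ rr m ⁻¹' t
      · exact Or.inl ⟨h, hx.2⟩
      · exact Or.inr (Or.inl ⟨hx.1, h⟩)
    · rw [e2]; refine lint_le _ _ _ _ _ hk1 ?_; intro x hx
      by_cases h : x ∈ I
      · exact Or.inl ⟨h, hx.2⟩
      · exact Or.inr (Or.inr ⟨hx.1, h⟩)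
  apply le_antisymm
  · refine ENNReal.le_of_forall_pos_le_add fun ε hε _ => ?_
    obtain ⟨a, b, d, hd, h1, h2, h3, h4, rfl⟩ := approx (ε / 2) (by positivity)
    exact eps_aux hd h1 h4
  · refine ENNReal.le_of_forall_pos_le_add fun ε hε _ => ?_
    obtain ⟨a, b, d, hd, h1, h2, h3, h4, rfl⟩ := approx (ε / 2) (by positivity)
    exact eps_aux hd h3 h2

theorem main (κ : Kernel S S) [IsMarkovKernel κ]
    (π : Measure S)
    (hinv : π.bind (fun a => κ a) = π)
    (huniq : ∀ π' : Measure S, IsProbabilityMeasure π' →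
      π'.bind (fun a => κ a) = π' → π' = π)
    (P : Measure (ℕ → S)) [IsProbabilityMeasure P]
    (hP0 : P.map (fun x => x 0) = π) (hP : Step κ P) :
    Ergodic (sh 1) P := by
  have hms := measurable_sh (S := S) 1
  have hmp : MeasurePreserving (sh 1) P P := by
    refine ⟨hms, ?_⟩
    have := Measure.isProbabilityMeasure_map (μ := P) hms.aemeasurable
    refine law_unique κ _ _ ?_ (step_map_sh κ P hP) hP
    rw [Measure.map_map (by fun_prop) hms, hP0]
    exact (law_one κ P hP).trans (by rw [hP0, hinv])
  refine ⟨hmp, ⟨fun I hI hinvI => ?_⟩⟩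
  rw [eventuallyConst_set']
  by_cases h0 : P I = 0
  · left; exact ae_eq_empty.2 h0
  right
  have : IsProbabilityMeasure (cond P I) := cond_isProbabilityMeasure h0
  have hQ : Step κ (cond P I) := by
    intro n A hA s hs
    rw [cond_apply hI, step_inv κ P hP hmp hI hinvI n A hA s hs, ProbabilityTheory.cond, Measure.restrict_smul,
      lintegral_smul_measure, Measure.restrict_restrict (measurable_rr n hs), Set.inter_comm I]
    rfl
  have hQsh : (cond P I).map (sh 1) = cond P I := by
    ext B hB
    rw [Measure.map_apply hms hB, cond_apply hI, cond_apply hI]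
    congr 1
    conv_lhs => rw [← hinvI, ← Set.preimage_inter]
    exact hmp.measure_preimage (hI.inter hB).nullMeasurableSet
  have hQ0 : (cond P I).map (fun x => x 0) = π := by
    refine huniq _ (Measure.isProbabilityMeasure_map (measurable_pi_apply 0).aemeasurable) ?_
    rw [← law_one κ _ hQ]
    conv_rhs => rw [← hQsh, Measure.map_map (by fun_prop) hms]
    rfl
  have hEq : cond P I = P := law_unique κ _ _ (hQ0.trans hP0.symm) hQ hP
  rw [ae_eq_univ, ← hEq, cond_apply hI]
  simp

end ShiftErg

/-- If a Markov kernel `κ` on a standard Borel space `S` admits a unique invariant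
probability measure `π`, then the trajectory measure `P_π` of the stationary Markov
chain is invariant under the left shift, and the shift is ergodic for `P_π`. -/
theorem shift_ergodic_of_unique_invariant_measure
    {S : Type*} [MeasurableSpace S] [StandardBorelSpace S] [Nonempty S]
    (κ : Kernel S S) [IsMarkovKernel κ]
    (π : Measure S) [IsProbabilityMeasure π]
    (hinv : π.bind (fun a => κ a) = π)
    (huniq : ∀ π' : Measure S, IsProbabilityMeasure π' →
      π'.bind (fun a => κ a) = π' → π' = π)
    (Pπ : Measure (ℕ → S)) [IsProbabilityMeasure Pπ]
    (hP0 : Pπ.map (fun x => x 0) = π)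
    (hPstep : ∀ (n : ℕ) (A : Set S), MeasurableSet A →
      ∀ B : Set (ℕ → S),
        MeasurableSet[MeasurableSpace.comap
          (fun x : ℕ → S => fun k : Fin (n + 1) => x k) MeasurableSpace.pi] B →
        Pπ (B ∩ {x : ℕ → S | x (n + 1) ∈ A}) = ∫⁻ x in B, κ (x n) A ∂Pπ) :
    MeasurePreserving (fun x : ℕ → S => fun k => x (k + 1)) Pπ Pπ ∧
      Ergodic (fun x : ℕ → S => fun k => x (k + 1)) Pπ := by

  have hP : ShiftErg.Step κ Pπ := fun n A hA s hs => hPstep n A hA _ ⟨s, hs, rfl⟩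
  have h := ShiftErg.main κ π hinv huniq Pπ hP0 hP
  exact ⟨h.toMeasurePreserving, h⟩
end
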